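/- Let r ∈ [0,1), m₁, m₂ ∈ ℝ, m = m₁+m₂. Let Φ ∈ S^r(ℝ^d×ℝ^d) be real-valued, b_j ∈ S^{m_j}(ℝ^d×ℝ^d), and a_j(x,ξ) = e^{iΦ(x,ξ)} b_j(x,ξ) for j = 1,2. Assume there is a compact K₀ ⊆ ℝ^d with a_j(x,ξ) = 0 for all x ∉ K₀ and all ξ. Let A_j = Op(a_j) and A₂* the formal adjoint of A₂ (the operator with amplitude conj(a₂(x',ξ))). Then there exists h ∈ S^m(ℝ^d×ℝ^d) such that A₂*A₁u = Op(h)u for all Schwartz u; explicitly h(x,ξ) = (2π)^{−d} ∫ ( ∫ a₁(y,ξ) conj(a₂(y,ξ+ζ)) e^{i⟨x−y,ζ⟩} dy ) dζ, and for every integer N ≥ 1, h − Σ_{|α|≤N−1} (α!)^{−1} h_α ∈ S^{m−N(1−r)}, where h_α(x,ξ) = D_x^α ( a₁(x,ξ) · conj(∂_ξ^α a₂(x,ξ)) ); moreover h_α ∈ S^{m−|α|(1−r)} for all α. -/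

import Mathlib

open MeasureTheory Filter Topology

noncomputable section

/-- Dot product on `ℝ^d`. -/
def dotp {d : ℕ} (x ξ : Fin d → ℝ) : ℝ := ∑ i, x i * ξ i

/-- Directional derivative of a function between normed spaces. -/
def dirDeriv {E F : Type*} [NormedAddCommGroup E] [NormedSpace ℝ E]
    [NormedAddCommGroup F] [NormedSpace ℝ F] (v : E) (f : E → F) : E → F :=
  fun x => fderiv ℝ f x v

/-- Iterated directional derivatives along a list of directions. -/
def dirDerivList {E F : Type*} [NormedAddCommGroup E] [NormedSpace ℝ E]
    [NormedAddCommGroup F] [NormedSpace ℝ F] : List E → (E → F) → E → F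
  | [], f => f
  | v :: l, f => dirDeriv v (dirDerivList l f)

/-- Multi-index partial derivative `∂^α` with respect to a family of directions. -/
def mpderivB {n : ℕ} {E F : Type*} [NormedAddCommGroup E] [NormedSpace ℝ E]
    [NormedAddCommGroup F] [NormedSpace ℝ F] (b : Fin n → E) (α : Fin n → ℕ)
    (f : E → F) : E → F :=
  dirDerivList ((List.finRange n).flatMap fun i => List.replicate (α i) (b i)) f

/-- Multi-index partial derivative `∂^α` on `ℝ^d`. -/
def mpderiv {d : ℕ} {F : Type*} [NormedAddCommGroup F] [NormedSpace ℝ F]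
    (α : Fin d → ℕ) (f : (Fin d → ℝ) → F) : (Fin d → ℝ) → F :=
  mpderivB (fun i => Pi.single i 1) α f

/-- Order `|α|` of a multi-index. -/
def mOrder {d : ℕ} (α : Fin d → ℕ) : ℕ := ∑ i, α i

/-- Factorial `α!` of a multi-index. -/
def mFactorial {d : ℕ} (α : Fin d → ℕ) : ℕ := ∏ i, (α i).factorial

/-- Power `ζ^α`. -/
def mpow {d : ℕ} (ζ : Fin d → ℝ) (α : Fin d → ℕ) : ℝ := ∏ i, ζ i ^ α i

/-- The finset of multi-indices of order `< N`. -/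
def mIdxLt (d N : ℕ) : Finset (Fin d → ℕ) :=
  (Fintype.piFinset fun _ : Fin d => Finset.range N).filter fun α => mOrder α < N

/-- The finset of multi-indices of order `= N`. -/
def mIdxEq (d N : ℕ) : Finset (Fin d → ℕ) :=
  (Fintype.piFinset fun _ : Fin d => Finset.range (N + 1)).filter fun α => mOrder α = N

/-- Hörmander symbol class `S^m_{ρ,δ}(X × ℝ^d)`. -/
def IsSymbol {d : ℕ} (X : Set (Fin d → ℝ)) (m ρ δ : ℝ)
    (a : (Fin d → ℝ) → (Fin d → ℝ) → ℂ) : Prop :=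
  ContDiffOn ℝ (⊤ : ℕ∞) (fun q : (Fin d → ℝ) × (Fin d → ℝ) => a q.1 q.2) (X ×ˢ Set.univ) ∧
  ∀ (α β : Fin d → ℕ) (K : Set (Fin d → ℝ)), IsCompact K → K ⊆ X →
    ∃ C : ℝ, ∀ x ∈ K, ∀ ξ : Fin d → ℝ,
      ‖mpderiv β (fun y => mpderiv α (fun η => a y η) ξ) x‖ ≤
        C * (1 + ‖ξ‖) ^ (m - ρ * (mOrder α : ℝ) + δ * (mOrder β : ℝ))

/-- Hörmander amplitude class `S^m_{ρ,δ,δ}(X × X × ℝ^d)`. -/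
def IsAmplitude {d : ℕ} (X : Set (Fin d → ℝ)) (m ρ δ : ℝ)
    (a : (Fin d → ℝ) → (Fin d → ℝ) → (Fin d → ℝ) → ℂ) : Prop :=
  ContDiffOn ℝ (⊤ : ℕ∞)
    (fun q : ((Fin d → ℝ) × (Fin d → ℝ)) × (Fin d → ℝ) => a q.1.1 q.1.2 q.2)
    ((X ×ˢ X) ×ˢ Set.univ) ∧
  ∀ (α β β' : Fin d → ℕ) (K : Set (Fin d → ℝ)), IsCompact K → K ⊆ X →
    ∃ C : ℝ, ∀ x ∈ K, ∀ x' ∈ K, ∀ ξ : Fin d → ℝ,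
      ‖mpderiv β (fun y => mpderiv β' (fun y' => mpderiv α (fun η => a y y' η) ξ) x') x‖ ≤
        C * (1 + ‖ξ‖) ^ (m - ρ * (mOrder α : ℝ) + δ * ((mOrder β : ℝ) + (mOrder β' : ℝ)))

/-- `C₀^∞(X)` test functions. -/
def IsTestFun {d : ℕ} (X : Set (Fin d → ℝ)) (u : (Fin d → ℝ) → ℂ) : Prop :=
  ContDiff ℝ (⊤ : ℕ∞) u ∧ HasCompactSupport u ∧ tsupport u ⊆ X

/-- Fourier transform `(2π)^{-d/2} ∫ e^{-i⟨x,ξ⟩} u(x) dx`. -/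
def fourierHat {d : ℕ} (u : (Fin d → ℝ) → ℂ) (ξ : Fin d → ℝ) : ℂ :=
  (((2 * Real.pi) ^ (-(d : ℝ) / 2) : ℝ) : ℂ) *
    ∫ x : Fin d → ℝ, Complex.exp (-(Complex.I * (dotp x ξ : ℂ))) * u x

/-- Pseudo-differential operator with symbol `a`. -/
def Op {d : ℕ} (a : (Fin d → ℝ) → (Fin d → ℝ) → ℂ) (u : (Fin d → ℝ) → ℂ) :
    (Fin d → ℝ) → ℂ := fun x =>
  (((2 * Real.pi) ^ (-(d : ℝ) / 2) : ℝ) : ℂ) *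
    ∫ ξ : Fin d → ℝ, Complex.exp (Complex.I * (dotp x ξ : ℂ)) * a x ξ * fourierHat u ξ

/-- Pseudo-differential operator with amplitude `a` (iterated integral). -/
def OpAmp {d : ℕ} (a : (Fin d → ℝ) → (Fin d → ℝ) → (Fin d → ℝ) → ℂ)
    (u : (Fin d → ℝ) → ℂ) : (Fin d → ℝ) → ℂ := fun x =>
  (((2 * Real.pi) ^ (-(d : ℝ)) : ℝ) : ℂ) *
    ∫ ξ : Fin d → ℝ, ∫ x' : Fin d → ℝ,
      Complex.exp (Complex.I * (dotp (x - x') ξ : ℂ)) * a x x' ξ * u x'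

/-- The formal adjoint `A*` of the PDO with symbol `a`. -/
def OpAdj {d : ℕ} (a : (Fin d → ℝ) → (Fin d → ℝ) → ℂ) (u : (Fin d → ℝ) → ℂ) :
    (Fin d → ℝ) → ℂ := fun x =>
  (((2 * Real.pi) ^ (-(d : ℝ)) : ℝ) : ℂ) *
    ∫ ξ : Fin d → ℝ, ∫ x' : Fin d → ℝ,
      Complex.exp (Complex.I * (dotp (x - x') ξ : ℂ)) * (starRingEnd ℂ) (a x' ξ) * u x'

/-- Gradient of a real-valued function on `ℝ^d`. -/
def gradR {d : ℕ} (f : (Fin d → ℝ) → ℝ) (x : Fin d → ℝ) : Fin d → ℝ :=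
  fun i => fderiv ℝ f x (Pi.single i 1)

end
open MeasureTheory Filter Topology
section dirBasics
variable {E F G : Type*} [NormedAddCommGroup E] [NormedSpace ℝ E]
  [NormedAddCommGroup F] [NormedSpace ℝ F] [NormedAddCommGroup G] [NormedSpace ℝ G]

lemma contDiff_dirDeriv {f : E → F} (hf : ContDiff ℝ (⊤ : ℕ∞) f) (v : E) :
    ContDiff ℝ (⊤ : ℕ∞) (dirDeriv v f) := by
  unfold dirDeriv
  have h1 : ContDiff ℝ (⊤ : ℕ∞) (fderiv ℝ f) := hf.fderiv_right (by simp)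
  exact h1.clm_apply contDiff_const

lemma contDiff_dirDerivList {f : E → F} (hf : ContDiff ℝ (⊤ : ℕ∞) f) (l : List E) :
    ContDiff ℝ (⊤ : ℕ∞) (dirDerivList l f) := by
  induction l with
  | nil => exact hf
  | cons v l ih => exact contDiff_dirDeriv ih v

lemma smooth_differentiable {f : E → F} (hf : ContDiff ℝ (⊤ : ℕ∞) f) : Differentiable ℝ f :=
  hf.differentiable (by simp)

lemma dirDeriv_comm {f : E → F} (hf : ContDiff ℝ (⊤ : ℕ∞) f) (v w : E) :
    dirDeriv v (dirDeriv w f) = dirDeriv w (dirDeriv v f) := by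
  have h1 : ContDiff ℝ (⊤ : ℕ∞) (fderiv ℝ f) := hf.fderiv_right (by simp)
  have hd := smooth_differentiable h1
  funext x
  have key : ∀ a b : E, dirDeriv a (dirDeriv b f) x = fderiv ℝ (fderiv ℝ f) x a b := by
    intro a b
    unfold dirDeriv
    rw [fderiv_clm_apply (hd x) (differentiableAt_const _)]
    simp
  rw [key, key]
  have hs : IsSymmSndFDerivAt ℝ f x :=
    (hf.contDiffAt).isSymmSndFDerivAt (by
      simp only [minSmoothness_of_isRCLikeNormedField]
      exact WithTop.coe_le_coe.2 (le_top : (2 : ℕ∞) ≤ ⊤))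
  exact hs v w

lemma dirDerivList_append (l l' : List E) (f : E → F) :
    dirDerivList (l ++ l') f = dirDerivList l (dirDerivList l' f) := by
  induction l with
  | nil => rfl
  | cons v l ih => simp only [List.cons_append, dirDerivList, ih]

lemma dirDerivList_perm {f : E → F} (hf : ContDiff ℝ (⊤ : ℕ∞) f) {l l' : List E}
    (h : l.Perm l') : dirDerivList l f = dirDerivList l' f := by
  induction h with
  | nil => rfl
  | cons v _ ih => simp only [dirDerivList, ih]
  | swap a b l => exact dirDeriv_comm (contDiff_dirDerivList hf l) _ _
  | trans _ _ ih1 ih2 => exact ih1.trans ih2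

lemma dirDerivList_cons' {f : E → F} (hf : ContDiff ℝ (⊤ : ℕ∞) f) (v : E) (l : List E) :
    dirDerivList (v :: l) f = dirDerivList l (dirDeriv v f) := by
  have h : (v :: l).Perm (l ++ [v]) := (List.perm_append_singleton v l).symm
  rw [dirDerivList_perm hf h, dirDerivList_append]
  rfl

lemma dirDerivList_comp_affine {f : F → G} (hf : ContDiff ℝ (⊤ : ℕ∞) f) (A : E →L[ℝ] F) (b : F)
    (l : List E) :
    dirDerivList l (fun x => f (A x + b)) = fun x => dirDerivList (l.map A) f (A x + b) := by
  induction l with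
  | nil => rfl
  | cons v l ih =>
    simp only [dirDerivList, ih, List.map_cons]
    funext x
    have hg := smooth_differentiable (contDiff_dirDerivList hf (l.map A))
    unfold dirDeriv
    have h1 : HasFDerivAt (fun x => A x + b) A x := A.hasFDerivAt.add_const b
    have h2 := ((hg (A x + b)).hasFDerivAt.comp x h1).fderiv
    change fderiv ℝ (dirDerivList (l.map A) f ∘ fun x => A x + b) x v = _
    rw [h2]; rfl

lemma dirDerivList_clm_comp {f : E → F} (hf : ContDiff ℝ (⊤ : ℕ∞) f) (T : F →L[ℝ] G)
    (l : List E) :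
    dirDerivList l (fun x => T (f x)) = fun x => T (dirDerivList l f x) := by
  induction l with
  | nil => rfl
  | cons v l ih =>
    simp only [dirDerivList, ih]
    funext x
    have hg := smooth_differentiable (contDiff_dirDerivList hf l)
    unfold dirDeriv
    have h2 := (T.hasFDerivAt.comp x (hg x).hasFDerivAt).fderiv
    change fderiv ℝ (T ∘ dirDerivList l f) x v = _
    rw [h2]; rfl

lemma dirDeriv_add {f g : E → F} (hf : Differentiable ℝ f) (hg : Differentiable ℝ g) (v : E) :
    dirDeriv v (fun x => f x + g x) = fun x => dirDeriv v f x + dirDeriv v g x := by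
  funext x
  unfold dirDeriv
  rw [fderiv_fun_add (hf x) (hg x)]; rfl

lemma dirDeriv_mul {f g : E → ℂ} (hf : Differentiable ℝ f) (hg : Differentiable ℝ g) (v : E) :
    dirDeriv v (fun x => f x * g x) = fun x => dirDeriv v f x * g x + f x * dirDeriv v g x := by
  funext x
  unfold dirDeriv
  rw [fderiv_fun_mul (hf x) (hg x)]
  simp; ring

lemma dirDerivList_add {f g : E → F} (hf : ContDiff ℝ (⊤ : ℕ∞) f) (hg : ContDiff ℝ (⊤ : ℕ∞) g)
    (l : List E) :
    dirDerivList l (fun x => f x + g x) = fun x => dirDerivList l f x + dirDerivList l g x := by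
  induction l with
  | nil => rfl
  | cons v l ih =>
    simp only [dirDerivList, ih]
    exact dirDeriv_add (smooth_differentiable (contDiff_dirDerivList hf l))
      (smooth_differentiable (contDiff_dirDerivList hg l)) v

lemma dirDerivList_zero_of_eqOn_open {f : E → F} {U : Set E} (hU : IsOpen U)
    (h : ∀ x ∈ U, f x = 0) (l : List E) : ∀ x ∈ U, dirDerivList l f x = 0 := by
  induction l with
  | nil => exact h
  | cons v l ih =>
    intro x hx
    simp only [dirDerivList, dirDeriv]
    have : dirDerivList l f =ᶠ[𝓝 x] fun _ => 0 := by
      filter_upwards [hU.mem_nhds hx] with y hy using ih y hy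
    rw [this.fderiv_eq]; simp

lemma dirDeriv_exp {φ : E → ℂ} (hφ : Differentiable ℝ φ) (v : E) :
    dirDeriv v (fun x => Complex.exp (Complex.I * φ x)) =
      fun x => (Complex.I * dirDeriv v φ x) * Complex.exp (Complex.I * φ x) := by
  funext x
  unfold dirDeriv
  have h2 := ((hφ x).hasFDerivAt.const_mul Complex.I).cexp.fderiv
  rw [h2]
  simp; ring

lemma contDiff_expI {φ : E → ℂ} (hφ : ContDiff ℝ (⊤ : ℕ∞) φ) :
    ContDiff ℝ (⊤ : ℕ∞) (fun x => Complex.exp (Complex.I * φ x)) :=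
  (contDiff_const.mul hφ).cexp
end dirBasics

open MeasureTheory Filter Topology
section classes
variable {d : ℕ} {P : Type*}

abbrev VV (d : ℕ) := (Fin d → ℝ) × (Fin d → ℝ)

/-- The standard basis directions of `ℝ^d × ℝ^d`. -/
def ebas {d : ℕ} : Fin d ⊕ Fin d → VV d
  | Sum.inl i => (Pi.single i 1, 0)
  | Sum.inr i => (0, Pi.single i 1)

/-- Derivatives along a list of basis directions. -/
noncomputable def DL {d : ℕ} (L : List (Fin d ⊕ Fin d)) (f : VV d → ℂ) : VV d → ℂ :=
  dirDerivList (L.map ebas) f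

/-- Weighted symbol-type estimates for families of functions, up to order `n`. -/
structure Cls {d : ℕ} {P : Type*} (S : Set (P × VV d)) (ω : Fin d ⊕ Fin d → P × VV d → ℝ) (n : ℕ)
    (W : P × VV d → ℝ) (f : P → VV d → ℂ) : Prop where
  smooth : ∀ p, ContDiff ℝ (⊤ : ℕ∞) (f p)
  bound : ∀ L : List (Fin d ⊕ Fin d), L.length ≤ n → ∃ C : ℝ, 0 ≤ C ∧ ∀ z ∈ S,
    ‖DL L (f z.1) z.2‖ ≤ C * (W z * (L.map (fun i => ω i z)).prod)

variable {S : Set (P × VV d)} {ω : Fin d ⊕ Fin d → P × VV d → ℝ} {n : ℕ}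
  {W W' : P × VV d → ℝ} {f g : P → VV d → ℂ}

lemma DL_cons {f : VV d → ℂ} (hf : ContDiff ℝ (⊤ : ℕ∞) f) (i : Fin d ⊕ Fin d) (L) :
    DL (i :: L) f = DL L (dirDeriv (ebas i) f) := by
  unfold DL
  rw [List.map_cons, dirDerivList_cons' hf]

lemma prod_weight_nonneg (hω : ∀ i, ∀ z ∈ S, 0 ≤ ω i z) (L : List (Fin d ⊕ Fin d)) {z}
    (hz : z ∈ S) : 0 ≤ (L.map (fun i => ω i z)).prod := by
  apply List.prod_nonneg
  intro a ha
  obtain ⟨i, _, rfl⟩ := List.mem_map.1 ha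
  exact hω i z hz

lemma Cls.le (h : Cls S ω n W f) {k : ℕ} (hk : k ≤ n) : Cls S ω k W f :=
  ⟨h.smooth, fun L hL => h.bound L (hL.trans hk)⟩

lemma Cls.subset (h : Cls S ω n W f) {S' : Set (P × VV d)} (hS : S' ⊆ S) : Cls S' ω n W f :=
  ⟨h.smooth, fun L hL => (h.bound L hL).imp fun _ hC => ⟨hC.1, fun z hz => hC.2 z (hS hz)⟩⟩

lemma Cls.mono (hω : ∀ i, ∀ z ∈ S, 0 ≤ ω i z) (h : Cls S ω n W f) {A : ℝ} (hA : 0 ≤ A)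
    (hW : ∀ z ∈ S, W z ≤ A * W' z) : Cls S ω n W' f := by
  refine ⟨h.smooth, fun L hL => ?_⟩
  obtain ⟨C, hC, hb⟩ := h.bound L hL
  refine ⟨C * A, by positivity, fun z hz => (hb z hz).trans ?_⟩
  have h1 := prod_weight_nonneg hω L hz
  calc C * (W z * (L.map (fun i => ω i z)).prod)
      ≤ C * ((A * W' z) * (L.map (fun i => ω i z)).prod) := by
        gcongr; exact hW z hz
    _ = _ := by ring

lemma Cls.deriv (h : Cls S ω (n + 1) W f) (i : Fin d ⊕ Fin d) :
    Cls S ω n (fun z => W z * ω i z) (fun p => dirDeriv (ebas i) (f p)) := by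
  refine ⟨fun p => contDiff_dirDeriv (h.smooth p) _, fun L hL => ?_⟩
  obtain ⟨C, hC, hb⟩ := h.bound (i :: L) (by simp; omega)
  refine ⟨C, hC, fun z hz => ?_⟩
  have := hb z hz
  rw [DL_cons (h.smooth _)] at this
  simp only [List.map_cons, List.prod_cons] at this
  rw [mul_assoc (W z)]
  exact this

lemma Cls.of_deriv (hs : ∀ p, ContDiff ℝ (⊤ : ℕ∞) (f p))
    (h0 : ∃ C, 0 ≤ C ∧ ∀ z ∈ S, ‖f z.1 z.2‖ ≤ C * W z)
    (h : ∀ i, Cls S ω n (fun z => W z * ω i z) (fun p => dirDeriv (ebas i) (f p))) :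
    Cls S ω (n + 1) W f := by
  refine ⟨hs, fun L hL => ?_⟩
  cases L with
  | nil =>
    obtain ⟨C, hC, h0⟩ := h0
    exact ⟨C, hC, fun z hz => by simpa [DL, dirDerivList] using h0 z hz⟩
  | cons i L =>
    obtain ⟨C, hC, hb⟩ := (h i).bound L (by simpa using hL)
    refine ⟨C, hC, fun z hz => ?_⟩
    rw [DL_cons (hs _)]
    simp only [List.map_cons, List.prod_cons]
    rw [← mul_assoc (W z)]
    exact hb z hz

lemma Cls.of_zero (hs : ∀ p, ContDiff ℝ (⊤ : ℕ∞) (f p))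
    (h0 : ∃ C, 0 ≤ C ∧ ∀ z ∈ S, ‖f z.1 z.2‖ ≤ C * W z) : Cls S ω 0 W f := by
  refine ⟨hs, fun L hL => ?_⟩
  have : L = [] := by simpa using hL
  subst this
  obtain ⟨C, hC, h0⟩ := h0
  exact ⟨C, hC, fun z hz => by simpa [DL, dirDerivList] using h0 z hz⟩

lemma Cls.zero_bound (h : Cls S ω n W f) : ∃ C, 0 ≤ C ∧ ∀ z ∈ S, ‖f z.1 z.2‖ ≤ C * W z := by
  obtain ⟨C, hC, hb⟩ := h.bound [] (by simp)
  exact ⟨C, hC, fun z hz => by simpa [DL, dirDerivList] using hb z hz⟩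

lemma Cls.add (hf : Cls S ω n W f) (hg : Cls S ω n W g) :
    Cls S ω n W (fun p q => f p q + g p q) := by
  refine ⟨fun p => (hf.smooth p).add (hg.smooth p), fun L hL => ?_⟩
  obtain ⟨C, hC, hb⟩ := hf.bound L hL
  obtain ⟨C', hC', hb'⟩ := hg.bound L hL
  refine ⟨C + C', by positivity, fun z hz => ?_⟩
  unfold DL
  rw [dirDerivList_add (hf.smooth _) (hg.smooth _)]
  refine (norm_add_le _ _).trans ?_
  rw [add_mul]
  exact add_le_add (hb z hz) (hb' z hz)

lemma Cls.mul (hω : ∀ i, ∀ z ∈ S, 0 ≤ ω i z) (hW : ∀ z ∈ S, 0 ≤ W z)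
    (hf : Cls S ω n W f) (hg : Cls S ω n W' g) :
    Cls S ω n (fun z => W z * W' z) (fun p q => f p q * g p q) := by
  induction n generalizing W W' f g with
  | zero =>
    refine Cls.of_zero (fun p => (hf.smooth p).mul (hg.smooth p)) ?_
    obtain ⟨C, hC, hb⟩ := hf.zero_bound
    obtain ⟨C', hC', hb'⟩ := hg.zero_bound
    refine ⟨C * C', by positivity, fun z hz => ?_⟩
    rw [norm_mul]
    calc _ ≤ (C * W z) * (C' * W' z) :=
          mul_le_mul (hb z hz) (hb' z hz) (norm_nonneg _) (mul_nonneg hC (hW z hz))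
      _ = _ := by ring
  | succ n ih =>
    refine Cls.of_deriv (fun p => (hf.smooth p).mul (hg.smooth p)) ?_ ?_
    · obtain ⟨C, hC, hb⟩ := hf.zero_bound
      obtain ⟨C', hC', hb'⟩ := hg.zero_bound
      refine ⟨C * C', by positivity, fun z hz => ?_⟩
      rw [norm_mul]
      calc _ ≤ (C * W z) * (C' * W' z) :=
            mul_le_mul (hb z hz) (hb' z hz) (norm_nonneg _) (mul_nonneg hC (hW z hz))
        _ = _ := by ring
    · intro i
      have e : (fun p => dirDeriv (ebas i) (fun q => f p q * g p q)) = fun p q =>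
          dirDeriv (ebas i) (f p) q * g p q + f p q * dirDeriv (ebas i) (g p) q := by
        funext p
        exact dirDeriv_mul (smooth_differentiable (hf.smooth p))
          (smooth_differentiable (hg.smooth p)) _
      rw [e]
      have h1 := ih (fun z hz => mul_nonneg (hW z hz) (hω i z hz)) (hf.deriv i) (hg.le (Nat.le_succ n))
      have h2 := ih hW (hf.le (Nat.le_succ n)) (hg.deriv i)
      refine Cls.add ?_ ?_
      · refine h1.mono hω zero_le_one (fun z hz => le_of_eq ?_); ring
      · refine h2.mono hω zero_le_one (fun z hz => le_of_eq ?_); ring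

lemma Cls.clm (hf : Cls S ω n W f) (T : ℂ →L[ℝ] ℂ) :
    Cls S ω n W (fun p q => T (f p q)) := by
  refine ⟨fun p => T.contDiff.comp (hf.smooth p), fun L hL => ?_⟩
  obtain ⟨C, hC, hb⟩ := hf.bound L hL
  refine ⟨‖T‖ * C, by positivity, fun z hz => ?_⟩
  unfold DL
  rw [dirDerivList_clm_comp (hf.smooth _), mul_assoc]
  exact (T.le_opNorm _).trans (mul_le_mul_of_nonneg_left (hb z hz) (norm_nonneg _))

lemma Cls.const_mul (hf : Cls S ω n W f) (c : ℂ) :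
    Cls S ω n W (fun p q => c * f p q) :=
  hf.clm ((ContinuousLinearMap.mul ℝ ℂ) c)

lemma Cls.conj (hf : Cls S ω n W f) :
    Cls S ω n W (fun p q => (starRingEnd ℂ) (f p q)) :=
  hf.clm (Complex.conjCLE : ℂ →L[ℝ] ℂ)

lemma Cls.exp (hω : ∀ i, ∀ z ∈ S, 0 ≤ ω i z) {φ : P → VV d → ℂ}
    (hs : ∀ p, ContDiff ℝ (⊤ : ℕ∞) (φ p))
    (hφ : ∀ i n, Cls S ω n (ω i) (fun p => dirDeriv (ebas i) (φ p)))
    (hre : ∀ p q, ‖Complex.exp (Complex.I * φ p q)‖ = 1) (n : ℕ) :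
    Cls S ω n (fun _ => 1) (fun p q => Complex.exp (Complex.I * φ p q)) := by
  have h0 : ∃ C : ℝ, 0 ≤ C ∧ ∀ z ∈ S, ‖(fun p q => Complex.exp (Complex.I * φ p q)) z.1 z.2‖
      ≤ C * (fun _ => (1 : ℝ)) z := ⟨1, zero_le_one, fun z _ => by simp only [hre]; simp⟩
  induction n with
  | zero => exact Cls.of_zero (fun p => contDiff_expI (hs p)) h0
  | succ n ih =>
    refine Cls.of_deriv (fun p => contDiff_expI (hs p)) h0 (fun i => ?_)
    have e : (fun p => dirDeriv (ebas i) (fun q => Complex.exp (Complex.I * φ p q))) = fun p q =>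
        (Complex.I * dirDeriv (ebas i) (φ p) q) * Complex.exp (Complex.I * φ p q) := by
      funext p
      exact dirDeriv_exp (smooth_differentiable (hs p)) _
    rw [e]
    refine (Cls.mul hω (hω i) ((hφ i n).const_mul Complex.I) ih).mono hω zero_le_one
      (fun z hz => le_of_eq ?_)
    ring
end classes

open MeasureTheory Filter Topology
section symbols
variable {d : ℕ} {P : Type*}

/-- Expansion of a multi-index as a list of indices. -/
def lst {d : ℕ} (α : Fin d → ℕ) : List (Fin d) :=
  (List.finRange d).flatMap fun i => List.replicate (α i) i

lemma mpderiv_eq_lst {F : Type*} [NormedAddCommGroup F] [NormedSpace ℝ F] (α : Fin d → ℕ)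
    (f : (Fin d → ℝ) → F) :
    mpderiv α f = dirDerivList ((lst α).map fun i => Pi.single i 1) f := by
  unfold mpderiv mpderivB lst
  simp [List.map_flatMap]

lemma count_lst (α : Fin d → ℕ) (i : Fin d) : (lst α).count i = α i := by
  unfold lst
  rw [List.count_flatMap]
  have : (List.count i ∘ fun i => List.replicate (α i) i) = fun j => if j = i then α i else 0 := by
    funext j
    by_cases h : j = i
    · subst h; simp
    · simp [List.count_replicate, h]
  rw [this, ← Fin.sum_univ_def]
  simp

lemma length_lst (α : Fin d → ℕ) : (lst α).length = mOrder α := by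
  unfold lst mOrder
  rw [List.length_flatMap]
  simp [Fin.sum_univ_def]

/-- Weights depending only on the type of direction. -/
def wt {d : ℕ} {P : Type*} (a b : P × VV d → ℝ) : Fin d ⊕ Fin d → P × VV d → ℝ
  | Sum.inl _ => a
  | Sum.inr _ => b

/-- Number of fibre directions in a list. -/
def nr {d : ℕ} (L : List (Fin d ⊕ Fin d)) : ℕ := L.countP Sum.isRight
/-- Number of base directions in a list. -/
def nl {d : ℕ} (L : List (Fin d ⊕ Fin d)) : ℕ := L.countP Sum.isLeft

lemma prod_wt (a b : P × VV d → ℝ) (L : List (Fin d ⊕ Fin d)) (z : P × VV d) :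
    (L.map (fun i => wt a b i z)).prod = a z ^ nl L * b z ^ nr L := by
  induction L with
  | nil => simp [nl, nr]
  | cons i L ih =>
    rw [List.map_cons, List.prod_cons, ih]
    cases i <;> simp [nl, nr, wt, pow_succ, List.countP_cons] <;> ring

/-- Japanese bracket. -/
noncomputable def jp {d : ℕ} (ξ : Fin d → ℝ) : ℝ := 1 + ‖ξ‖

lemma jp_pos (ξ : Fin d → ℝ) : 0 < jp ξ := by unfold jp; positivity
lemma one_le_jp (ξ : Fin d → ℝ) : 1 ≤ jp ξ := by unfold jp; simp

/-- Symbol class on the product. -/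
def PSym {d : ℕ} (m : ℝ) (f : VV d → ℂ) : Prop :=
  ∀ K : Set (Fin d → ℝ), IsCompact K → ∀ n, Cls (P := Unit) {z | z.2.1 ∈ K}
    (wt (fun _ => 1) (fun z => (jp z.2.2)⁻¹)) n (fun z => jp z.2.2 ^ m) (fun _ => f)

lemma mixed_eq {a : (Fin d → ℝ) → (Fin d → ℝ) → ℂ}
    (ha : ContDiff ℝ (⊤ : ℕ∞) (fun q : VV d => a q.1 q.2)) (l l' : List (Fin d))
    (x ξ : Fin d → ℝ) :
    dirDerivList (l'.map fun i => Pi.single i (1 : ℝ))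
      (fun y => dirDerivList (l.map fun i => Pi.single i (1 : ℝ)) (fun η => a y η) ξ) x =
    DL (l'.map Sum.inl ++ l.map Sum.inr) (fun q : VV d => a q.1 q.2) (x, ξ) := by
  have h1 : ∀ y η, dirDerivList (l.map fun i => Pi.single i (1 : ℝ)) (fun η => a y η) η =
      DL (l.map Sum.inr) (fun q : VV d => a q.1 q.2) (y, η) := by
    intro y η
    have := congrFun (dirDerivList_comp_affine ha
      (ContinuousLinearMap.inr ℝ (Fin d → ℝ) (Fin d → ℝ)) (y, 0)
      (l.map fun i => Pi.single i (1 : ℝ))) η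
    simp only [ContinuousLinearMap.inr_apply, Prod.mk_add_mk, zero_add, add_zero, List.map_map] at this
    rw [this]
    unfold DL
    rw [List.map_map]
    rfl
  simp_rw [h1]
  have hg : ContDiff ℝ (⊤ : ℕ∞) (DL (l.map Sum.inr) (fun q : VV d => a q.1 q.2)) :=
    contDiff_dirDerivList ha _
  have := congrFun (dirDerivList_comp_affine hg
      (ContinuousLinearMap.inl ℝ (Fin d → ℝ) (Fin d → ℝ)) (0, ξ)
      (l'.map fun i => Pi.single i (1 : ℝ))) x
  simp only [ContinuousLinearMap.inl_apply, Prod.mk_add_mk, zero_add, add_zero, List.map_map] at this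
  rw [this]
  unfold DL
  rw [List.map_append, dirDerivList_append, List.map_map, List.map_map]
  rfl

lemma DL_perm {f : VV d → ℂ} (hf : ContDiff ℝ (⊤ : ℕ∞) f) {L L' : List (Fin d ⊕ Fin d)}
    (h : L.Perm L') : DL L f = DL L' f :=
  dirDerivList_perm hf (h.map _)

lemma perm_split (L : List (Fin d ⊕ Fin d)) :
    ∃ l l' : List (Fin d), L.Perm (l'.map Sum.inl ++ l.map Sum.inr) := by
  induction L with
  | nil => exact ⟨[], [], by simp⟩
  | cons i L ih =>
    obtain ⟨l, l', h⟩ := ih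
    cases i with
    | inl i => exact ⟨l, i :: l', by simpa using h⟩
    | inr i =>
      refine ⟨i :: l, l', (h.cons _).trans ?_⟩
      rw [List.map_cons]
      exact List.perm_middle.symm

lemma perm_lst (l : List (Fin d)) : l.Perm (lst (fun i => l.count i)) := by
  rw [List.perm_iff_count]
  intro i
  rw [count_lst]

lemma perm_canonical (L : List (Fin d ⊕ Fin d)) :
    ∃ α β : Fin d → ℕ, L.Perm ((lst β).map Sum.inl ++ (lst α).map Sum.inr) := by
  obtain ⟨l, l', h⟩ := perm_split L
  exact ⟨_, _, h.trans (((perm_lst l').map _).append ((perm_lst l).map _))⟩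

lemma nr_canonical (l l' : List (Fin d)) : nr (l'.map Sum.inl ++ l.map Sum.inr) = l.length := by
  unfold nr
  rw [List.countP_append, List.countP_map, List.countP_map]
  simp [Function.comp_def]

lemma jp_pow_eq (m : ℝ) (ξ : Fin d → ℝ) (k : ℕ) :
    jp ξ ^ m * (jp ξ)⁻¹ ^ k = jp ξ ^ (m - k) := by
  rw [Real.rpow_sub (jp_pos ξ), Real.rpow_natCast, inv_pow]; rfl

lemma isSymbol_iff {m : ℝ} {a : (Fin d → ℝ) → (Fin d → ℝ) → ℂ} :
    IsSymbol Set.univ m 1 0 a ↔ PSym m (fun q => a q.1 q.2) := by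
  constructor
  · rintro ⟨hs, hb⟩ K hK n
    have hs' : ContDiff ℝ (⊤ : ℕ∞) (fun q : VV d => a q.1 q.2) := by
      rw [← contDiffOn_univ]; simpa using hs
    refine ⟨fun _ => hs', fun L _ => ?_⟩
    obtain ⟨α, β, hp⟩ := perm_canonical L
    obtain ⟨C, hC⟩ := hb α β K hK
      (Set.subset_univ _)
    refine ⟨|C|, abs_nonneg _, ?_⟩
    rintro ⟨u, x, ξ⟩ hx
    have h1 := hC x hx ξ
    simp only [mpderiv_eq_lst] at h1
    rw [mixed_eq hs', ← DL_perm hs' hp] at h1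
    refine h1.trans ?_
    rw [prod_wt]
    simp only [one_pow, one_mul]
    rw [jp_pow_eq, show nr L = nr _ from hp.countP_eq Sum.isRight,
      nr_canonical, length_lst]
    simp only [zero_mul, add_zero]
    exact mul_le_mul_of_nonneg_right (le_abs_self C) (Real.rpow_nonneg (jp_pos ξ).le _)
  · intro h
    have hs' : ContDiff ℝ (⊤ : ℕ∞) (fun q : VV d => a q.1 q.2) :=
      (h ∅ isCompact_empty 0).smooth ()
    refine ⟨hs'.contDiffOn, fun α β K hK _ => ?_⟩
    obtain ⟨C, hC, hb⟩ := (h K hK _).bound ((lst β).map Sum.inl ++ (lst α).map Sum.inr) le_rfl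
    refine ⟨C, fun x hx ξ => ?_⟩
    have := hb ((), x, ξ) hx
    simp only [mpderiv_eq_lst]
    rw [mixed_eq hs']
    refine this.trans (le_of_eq ?_)
    rw [prod_wt]
    simp only [one_pow, one_mul]
    rw [jp_pow_eq, nr_canonical, length_lst]
    simp [jp]

lemma PSym.smooth {m : ℝ} {f : VV d → ℂ} (h : PSym m f) : ContDiff ℝ (⊤ : ℕ∞) f :=
  (h ∅ isCompact_empty 0).smooth ()

lemma sym_weight_nonneg (S : Set (Unit × VV d)) : ∀ i, ∀ z ∈ S,
    0 ≤ wt (d := d) (P := Unit) (fun _ => 1) (fun z => (jp z.2.2)⁻¹) i z := by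
  rintro (i | i) z _
  · exact zero_le_one
  · exact (inv_pos.2 (jp_pos _)).le

lemma PSym.mul {m m' : ℝ} {f g : VV d → ℂ} (hf : PSym m f) (hg : PSym m' g) :
    PSym (m + m') (fun q => f q * g q) := by
  intro K hK n
  refine (Cls.mul (sym_weight_nonneg _) (fun z _ => Real.rpow_nonneg (jp_pos _).le _)
    (hf K hK n) (hg K hK n)).mono (sym_weight_nonneg _) zero_le_one (fun z _ => le_of_eq ?_)
  rw [one_mul, Real.rpow_add (jp_pos _)]

lemma PSym.le {m m' : ℝ} {f : VV d → ℂ} (hf : PSym m f) (h : m ≤ m') : PSym m' f := by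
  intro K hK n
  refine (hf K hK n).mono (sym_weight_nonneg _) zero_le_one (fun z _ => ?_)
  rw [one_mul]
  exact Real.rpow_le_rpow_of_exponent_le (one_le_jp _) h

lemma PSym.add {m : ℝ} {f g : VV d → ℂ} (hf : PSym m f) (hg : PSym m g) :
    PSym m (fun q => f q + g q) := fun K hK n => (hf K hK n).add (hg K hK n)

lemma PSym.const_mul {m : ℝ} {f : VV d → ℂ} (hf : PSym m f) (c : ℂ) :
    PSym m (fun q => c * f q) := fun K hK n => (hf K hK n).const_mul c

lemma PSym.conj {m : ℝ} {f : VV d → ℂ} (hf : PSym m f) :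
    PSym m (fun q => (starRingEnd ℂ) (f q)) := fun K hK n => (hf K hK n).conj

lemma PSym.deriv_inl {m : ℝ} {f : VV d → ℂ} (hf : PSym m f) (i : Fin d) :
    PSym m (dirDeriv (ebas (Sum.inl i)) f) := by
  intro K hK n
  refine ((hf K hK (n + 1)).deriv (Sum.inl i)).mono (sym_weight_nonneg _) zero_le_one
    (fun z _ => le_of_eq ?_)
  simp [wt]

lemma PSym.deriv_inr {m : ℝ} {f : VV d → ℂ} (hf : PSym m f) (i : Fin d) :
    PSym (m - 1) (dirDeriv (ebas (Sum.inr i)) f) := by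
  intro K hK n
  refine ((hf K hK (n + 1)).deriv (Sum.inr i)).mono (sym_weight_nonneg _) zero_le_one
    (fun z _ => le_of_eq ?_)
  have := jp_pow_eq m z.2.2 1
  simpa [wt] using this

lemma PSym.zero (m : ℝ) : PSym (d := d) m (fun _ => 0) := by
  intro K hK n
  refine ⟨fun _ => contDiff_const, fun L _ => ⟨0, le_rfl, fun z _ => ?_⟩⟩
  have := dirDerivList_zero_of_eqOn_open (f := fun _ : VV d => (0 : ℂ)) isOpen_univ (fun _ _ => rfl)
    (L.map ebas) z.2 (Set.mem_univ _)
  unfold DL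
  rw [this]; simp

lemma PSym.sum {ι : Type*} {m : ℝ} (s : Finset ι) {f : ι → VV d → ℂ} (hf : ∀ i ∈ s, PSym m (f i)) :
    PSym m (fun q => ∑ i ∈ s, f i q) := by
  classical
  induction s using Finset.induction_on with
  | empty => simpa using PSym.zero m
  | insert i s hi ih =>
    simp only [Finset.sum_insert hi]
    exact (hf i (by simp)).add (ih fun j hj => hf j (by simp [hj]))

lemma PSym.DL_inl {m : ℝ} {f : VV d → ℂ} (hf : PSym m f) (l : List (Fin d)) :
    PSym m (DL (l.map Sum.inl) f) := by
  induction l with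
  | nil => exact hf
  | cons i l ih => exact ih.deriv_inl i

/-- Fibre derivatives of `e^{iΦ} b`. -/
lemma exp_symbol_deriv {r m : ℝ} (hr : 0 ≤ r) {φ b : VV d → ℂ} (hφ : PSym r φ) (hb : PSym m b)
    {K₀ : Set (Fin d → ℝ)} (hK₀ : IsClosed K₀) (hsupp : ∀ q : VV d, q.1 ∉ K₀ → b q = 0)
    (l : List (Fin d)) :
    ∃ c : VV d → ℂ, PSym (m - l.length * (1 - r)) c ∧ (∀ q : VV d, q.1 ∉ K₀ → c q = 0) ∧
      DL (l.map Sum.inr) (fun q => Complex.exp (Complex.I * φ q) * b q) =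
        fun q => Complex.exp (Complex.I * φ q) * c q := by
  induction l with
  | nil => exact ⟨b, by simpa using hb, hsupp, rfl⟩
  | cons i l ih =>
    obtain ⟨c, hc, hc0, he⟩ := ih
    refine ⟨fun q => dirDeriv (ebas (Sum.inr i)) c q +
      Complex.I * (dirDeriv (ebas (Sum.inr i)) φ q * c q), ?_, ?_, ?_⟩
    · refine PSym.add ((hc.deriv_inr i).le ?_)
        ((((hφ.deriv_inr i).mul hc).le (le_of_eq ?_)).const_mul _)
      · push_cast [List.length_cons]; linarith
      · push_cast [List.length_cons]; ring
    · intro q hq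
      have hU : IsOpen {q : VV d | q.1 ∉ K₀} := (hK₀.preimage continuous_fst).isOpen_compl
      have h1 := dirDerivList_zero_of_eqOn_open hU (f := c) (fun q hq => hc0 q hq)
        [ebas (Sum.inr i)] q hq
      simp only [dirDerivList] at h1
      simp [h1, hc0 q hq]
    · have : DL ((i :: l).map Sum.inr) (fun q => Complex.exp (Complex.I * φ q) * b q) =
        dirDeriv (ebas (Sum.inr i)) (DL (l.map Sum.inr)
          (fun q => Complex.exp (Complex.I * φ q) * b q)) := rfl
      rw [this, he, dirDeriv_mul (smooth_differentiable (contDiff_expI hφ.smooth))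
        (smooth_differentiable hc.smooth), dirDeriv_exp (smooth_differentiable hφ.smooth)]
      funext q
      ring
end symbols

open MeasureTheory Filter Topology
section gfamily
variable {d : ℕ}

abbrev PP (d : ℕ) := (Fin d → ℝ) × ℝ

lemma PSym.bound {m : ℝ} {f : VV d → ℂ} (hf : PSym m f) {K : Set (Fin d → ℝ)} (hK : IsCompact K)
    (L : List (Fin d ⊕ Fin d)) : ∃ C, 0 ≤ C ∧ ∀ y ∈ K, ∀ ξ,
      ‖DL L f (y, ξ)‖ ≤ C * (jp ξ ^ m * (jp ξ)⁻¹ ^ nr L) := by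
  obtain ⟨C, hC, hb⟩ := (hf K hK _).bound L le_rfl
  refine ⟨C, hC, fun y hy ξ => ?_⟩
  have := hb ((), y, ξ) hy
  rw [prod_wt] at this
  simpa using this

lemma jp_shift_le {ξ ζ : Fin d → ℝ} {t : ℝ} (ht : t ∈ Set.Icc (0 : ℝ) 1) :
    jp (ξ + t • ζ) ≤ jp ξ * jp ζ := by
  have h1 : ‖ξ + t • ζ‖ ≤ ‖ξ‖ + ‖ζ‖ := by
    refine (norm_add_le _ _).trans ?_
    rw [norm_smul, Real.norm_of_nonneg ht.1]
    have := mul_le_mul_of_nonneg_right ht.2 (norm_nonneg ζ)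
    linarith
  unfold jp
  nlinarith [norm_nonneg ξ, norm_nonneg ζ, mul_nonneg (norm_nonneg ξ) (norm_nonneg ζ)]

lemma jp_le_shift {ξ ζ : Fin d → ℝ} {t : ℝ} (ht : t ∈ Set.Icc (0 : ℝ) 1) :
    jp ξ ≤ jp (ξ + t • ζ) * jp ζ := by
  have h := jp_shift_le (ξ := ξ + t • ζ) (ζ := -ζ) ht
  have e : ξ + t • ζ + t • (-ζ) = ξ := by simp
  rw [e] at h
  simpa [jp] using h

lemma jp_inv_shift_le {ξ ζ : Fin d → ℝ} {t : ℝ} (ht : t ∈ Set.Icc (0 : ℝ) 1) :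
    (jp (ξ + t • ζ))⁻¹ ≤ jp ζ * (jp ξ)⁻¹ := by
  have h := jp_le_shift (ξ := ξ) (ζ := ζ) ht
  have h1 := jp_pos ξ
  have h2 := jp_pos (ξ + t • ζ)
  rw [← div_eq_mul_inv, le_div_iff₀ h1, inv_mul_le_iff₀ h2]
  exact h

lemma peetre {ξ ζ : Fin d → ℝ} {t : ℝ} (ht : t ∈ Set.Icc (0 : ℝ) 1) (s : ℝ) :
    jp (ξ + t • ζ) ^ s ≤ jp ξ ^ s * jp ζ ^ |s| := by
  have p1 := jp_pos ξ
  have p2 := jp_pos (ξ + t • ζ)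
  have p3 := jp_pos ζ
  rcases le_total 0 s with hs | hs
  · rw [abs_of_nonneg hs, ← Real.mul_rpow p1.le p3.le]
    exact Real.rpow_le_rpow p2.le (jp_shift_le ht) hs
  · rw [abs_of_nonpos hs]
    have h1 : jp ξ ^ (-s) ≤ jp (ξ + t • ζ) ^ (-s) * jp ζ ^ (-s) := by
      rw [← Real.mul_rpow p2.le p3.le]
      exact Real.rpow_le_rpow p1.le (jp_le_shift ht) (by linarith)
    have e1 : jp ξ ^ s * jp ξ ^ (-s) = 1 := by rw [← Real.rpow_add p1]; simp
    have e2 : jp (ξ + t • ζ) ^ s * jp (ξ + t • ζ) ^ (-s) = 1 := by rw [← Real.rpow_add p2]; simp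
    have q1 := Real.rpow_pos_of_pos p1 s
    have q2 := Real.rpow_pos_of_pos p2 s
    have h2 := mul_le_mul_of_nonneg_left h1 (mul_pos q1 q2).le
    calc jp (ξ + t • ζ) ^ s = jp ξ ^ s * jp (ξ + t • ζ) ^ s * jp ξ ^ (-s) := by
          rw [mul_right_comm, e1, one_mul]
      _ ≤ _ := h2
      _ = jp ξ ^ s * jp ζ ^ (-s) * (jp (ξ + t • ζ) ^ s * jp (ξ + t • ζ) ^ (-s)) := by ring
      _ = _ := by rw [e2, mul_one]

/-- Weights for the amplitude family. -/
noncomputable def om {d : ℕ} (r : ℝ) : Fin d ⊕ Fin d → PP d × VV d → ℝ :=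
  wt (fun z => jp z.1.1 ^ r) (fun z => jp z.1.1 ^ 2 * (jp z.2.2)⁻¹)

/-- Region of the parameters. -/
def SK {d : ℕ} (K : Set (Fin d → ℝ)) : Set (PP d × VV d) :=
  {z | z.1.2 ∈ Set.Icc (0 : ℝ) 1 ∧ z.2.1 ∈ K}

lemma om_nonneg (r : ℝ) (S : Set (PP d × VV d)) : ∀ i, ∀ z ∈ S, 0 ≤ om r i z := by
  rintro (i | i) z _
  · exact Real.rpow_nonneg (jp_pos _).le _
  · exact mul_nonneg (pow_nonneg (jp_pos _).le _) (inv_pos.2 (jp_pos _)).le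

lemma DL_shift {f : VV d → ℂ} (hf : ContDiff ℝ (⊤ : ℕ∞) f) (L : List (Fin d ⊕ Fin d)) (b : VV d)
    (q : VV d) : DL L (fun q => f (q + b)) q = DL L f (q + b) := by
  have := congrFun (dirDerivList_comp_affine hf (ContinuousLinearMap.id ℝ (VV d)) b (L.map ebas)) q
  simpa [DL] using this

lemma om_prod_ge {r : ℝ} (hr : 0 ≤ r) (L : List (Fin d ⊕ Fin d)) (z : PP d × VV d) :
    (jp z.1.1 * (jp z.2.2)⁻¹) ^ nr L ≤ (L.map (fun i => om r i z)).prod := by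
  unfold om
  rw [prod_wt]
  have h1 : 1 ≤ (jp z.1.1 ^ r) ^ nl L := one_le_pow₀ (Real.one_le_rpow (one_le_jp _) hr)
  have h0 : (0 : ℝ) ≤ (jp z.2.2)⁻¹ := (inv_pos.2 (jp_pos _)).le
  have h2 : (jp z.1.1 * (jp z.2.2)⁻¹) ^ nr L ≤ (jp z.1.1 ^ 2 * (jp z.2.2)⁻¹) ^ nr L := by
    refine pow_le_pow_left₀ (mul_nonneg (jp_pos _).le h0) ?_ _
    refine mul_le_mul_of_nonneg_right ?_ h0
    nlinarith [one_le_jp z.1.1]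
  refine h2.trans (le_mul_of_one_le_left ?_ h1)
  exact pow_nonneg (mul_nonneg (pow_nonneg (jp_pos _).le _) h0) _

lemma PSym.shift_cls {r m : ℝ} (hr : 0 ≤ r) {f : VV d → ℂ} (hf : PSym m f)
    {K : Set (Fin d → ℝ)} (hK : IsCompact K) (σ : ℝ → ℝ)
    (hσ : ∀ t ∈ Set.Icc (0 : ℝ) 1, σ t ∈ Set.Icc (0 : ℝ) 1) (n : ℕ) :
    Cls (SK K) (om r) n (fun z => jp z.2.2 ^ m * jp z.1.1 ^ |m|)
      (fun p q => f (q + (0, σ p.2 • p.1))) := by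
  refine ⟨fun p => hf.smooth.comp (contDiff_id.add contDiff_const), fun L _ => ?_⟩
  obtain ⟨C, hC, hb⟩ := hf.bound hK L
  refine ⟨C, hC, ?_⟩
  rintro ⟨⟨ζ, t⟩, y, ξ⟩ ⟨ht, hy⟩
  rw [DL_shift hf.smooth]
  simp only [Prod.mk_add_mk, add_zero]
  refine (hb y hy _).trans (mul_le_mul_of_nonneg_left ?_ hC)
  have ht' := hσ t ht
  refine mul_le_mul (peetre ht' m) ?_ (pow_nonneg (inv_pos.2 (jp_pos _)).le _)
    (mul_nonneg (Real.rpow_nonneg (jp_pos _).le _) (Real.rpow_nonneg (jp_pos _).le _))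
  refine le_trans ?_ (om_prod_ge hr L _)
  exact pow_le_pow_left₀ (inv_pos.2 (jp_pos _)).le (jp_inv_shift_le ht') _

lemma norm_fderiv_snd_le {f : VV d → ℂ} {q : VV d} (ζ : Fin d → ℝ) {B : Fin d → ℝ}
    (hB : ∀ j, ‖dirDeriv (ebas (Sum.inr j)) f q‖ ≤ B j) :
    ‖fderiv ℝ f q (0, ζ)‖ ≤ ‖ζ‖ * ∑ j, B j := by
  have e : ((0, ζ) : VV d) = ∑ j, ζ j • ebas (Sum.inr j) := by
    have h1 : ζ = ∑ j, ζ j • (Pi.single j 1 : Fin d → ℝ) := by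
      funext k; simp [Finset.sum_apply, Pi.single_apply]
    refine Prod.ext ?_ ?_
    · simp [Prod.fst_sum, ebas]
    · rw [Prod.snd_sum]; simpa [ebas] using h1
  rw [e, map_sum, Finset.mul_sum]
  refine norm_sum_le_of_le _ fun j _ => ?_
  rw [map_smul, norm_smul]
  exact mul_le_mul (norm_le_pi_norm ζ j) (hB j) (norm_nonneg _) (norm_nonneg _)

lemma psi_bound {r : ℝ} (hr : r ∈ Set.Ico (0 : ℝ) 1) {φ : VV d → ℂ} (hφ : PSym r φ)
    {K : Set (Fin d → ℝ)} (hK : IsCompact K) (L : List (Fin d ⊕ Fin d)) :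
    ∃ C : ℝ, 0 ≤ C ∧ ∀ z ∈ SK K,
      ‖DL L φ (z.2 + (0, z.1.2 • z.1.1)) - DL L φ z.2‖ ≤
        C * (jp z.1.1 ^ r * (jp z.1.1 * (jp z.2.2)⁻¹) ^ nr L) := by
  obtain ⟨C, hC, hb⟩ := hφ.bound hK L
  choose B hB0 hB using fun j => hφ.bound hK (Sum.inr j :: L)
  have hnr : ∀ j : Fin d, nr (Sum.inr j :: L) = nr L + 1 := fun j => by
    simp [nr, List.countP_cons]
  have hsum : 0 ≤ ∑ j, B j := Finset.sum_nonneg fun j _ => hB0 j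
  refine ⟨C * (3 ^ r + 2 ^ r) + 4 ^ (1 - r) * ∑ j, B j, by positivity, ?_⟩
  rintro ⟨⟨ζ, t⟩, y, ξ⟩ ⟨ht, hy⟩
  simp only [Prod.mk_add_mk, add_zero]
  have pξ := jp_pos ξ
  have pζ := jp_pos ζ
  set k := nr L
  set Q := (jp ζ * (jp ξ)⁻¹) ^ k with hQ
  have hQ0 : 0 ≤ Q := pow_nonneg (mul_nonneg pζ.le (inv_pos.2 pξ).le) _
  have hZ0 : 0 ≤ jp ζ ^ r := Real.rpow_nonneg pζ.le _
  have shQ : ∀ s ∈ Set.Icc (0 : ℝ) 1, (jp (ξ + s • ζ))⁻¹ ^ k ≤ Q := fun s hs =>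
    pow_le_pow_left₀ (inv_pos.2 (jp_pos _)).le (jp_inv_shift_le hs) _
  by_cases hcase : jp ξ ≤ 2 * ‖ζ‖
  · have h2 : ‖DL L φ (y, ξ)‖ ≤ C * 2 ^ r * (jp ζ ^ r * Q) := by
      refine (hb y hy ξ).trans ?_
      have h3 : jp ξ ^ r ≤ 2 ^ r * jp ζ ^ r := by
        rw [← Real.mul_rpow (by norm_num) pζ.le]
        refine Real.rpow_le_rpow pξ.le ?_ hr.1
        unfold jp at *; linarith
      have h4 := shQ 0 (by simp)
      rw [zero_smul, add_zero] at h4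
      calc C * (jp ξ ^ r * (jp ξ)⁻¹ ^ k) ≤ C * ((2 ^ r * jp ζ ^ r) * Q) := by gcongr
        _ = _ := by ring
    have h1 : ‖DL L φ (y, ξ + t • ζ)‖ ≤ C * 3 ^ r * (jp ζ ^ r * Q) := by
      refine (hb y hy _).trans ?_
      have h3 : jp (ξ + t • ζ) ^ r ≤ 3 ^ r * jp ζ ^ r := by
        rw [← Real.mul_rpow (by norm_num) pζ.le]
        refine Real.rpow_le_rpow (jp_pos _).le ?_ hr.1
        have h5 : ‖ξ + t • ζ‖ ≤ ‖ξ‖ + ‖ζ‖ := by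
          refine (norm_add_le _ _).trans ?_
          rw [norm_smul, Real.norm_of_nonneg ht.1]
          have := mul_le_mul_of_nonneg_right ht.2 (norm_nonneg ζ)
          linarith
        unfold jp at *; linarith
      have h4 := shQ t ht
      have h5 : 0 ≤ (jp (ξ + t • ζ))⁻¹ ^ k := pow_nonneg (inv_pos.2 (jp_pos _)).le _
      calc C * (jp (ξ + t • ζ) ^ r * (jp (ξ + t • ζ))⁻¹ ^ k) ≤ C * ((3 ^ r * jp ζ ^ r) * Q) := by
            gcongr
        _ = _ := by ring
    refine (norm_sub_le _ _).trans ?_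
    have h3 : 0 ≤ 4 ^ (1 - r) * (∑ j, B j) * (jp ζ ^ r * Q) := by positivity
    nlinarith [h1, h2, h3]
  · push Not at hcase
    have hg : ContDiff ℝ (⊤ : ℕ∞) (DL L φ) := contDiff_dirDerivList hφ.smooth _
    have hder : ∀ s : ℝ, HasDerivAt (fun s : ℝ => DL L φ (y, ξ + s • ζ))
        (fderiv ℝ (DL L φ) (y, ξ + s • ζ) (0, ζ)) s := by
      intro s
      have h1 : HasDerivAt (fun s : ℝ => ((y, ξ + s • ζ) : VV d)) (0, ζ) s := by
        refine (hasDerivAt_const s y).prodMk ?_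
        simpa using ((hasDerivAt_id s).smul_const ζ).const_add ξ
      exact (smooth_differentiable hg _).hasFDerivAt.comp_hasDerivAt s h1
    have hbd : ∀ s ∈ Set.Icc (0 : ℝ) 1, ‖fderiv ℝ (DL L φ) (y, ξ + s • ζ) (0, ζ)‖ ≤
        4 ^ (1 - r) * (∑ j, B j) * (jp ζ ^ r * Q) := by
      intro s hs
      have pp := jp_pos (ξ + s • ζ)
      have h1 := norm_fderiv_snd_le (f := DL L φ) (q := (y, ξ + s • ζ)) ζ
        (B := fun j => B j * (jp (ξ + s • ζ) ^ r * (jp (ξ + s • ζ))⁻¹ ^ (k + 1))) (fun j => by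
          have := hB j y hy (ξ + s • ζ)
          rw [hnr] at this
          exact this)
      refine h1.trans ?_
      rw [← Finset.sum_mul]
      have e1 : jp (ξ + s • ζ) ^ r * (jp (ξ + s • ζ))⁻¹ ^ (k + 1) =
          jp (ξ + s • ζ) ^ (r - 1) * (jp (ξ + s • ζ))⁻¹ ^ k := by
        rw [Real.rpow_sub_one pp.ne']; ring
      rw [e1]
      have h2 : jp (ξ + s • ζ) ^ (r - 1) ≤ (jp ζ / 4) ^ (r - 1) := by
        refine Real.rpow_le_rpow_of_nonpos (by positivity) ?_ (by linarith [hr.2])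
        have h5 : ‖ξ‖ ≤ ‖ξ + s • ζ‖ + ‖ζ‖ := by
          have h6 : ‖ξ‖ ≤ ‖ξ + s • ζ‖ + ‖s • ζ‖ := by
            have := norm_sub_le (ξ + s • ζ) (s • ζ)
            simpa using this
          rw [norm_smul, Real.norm_of_nonneg hs.1] at h6
          have := mul_le_mul_of_nonneg_right hs.2 (norm_nonneg ζ)
          linarith
        unfold jp at *; linarith [norm_nonneg ξ, norm_nonneg ζ]
      have e2 : (jp ζ / 4) ^ (r - 1) = 4 ^ (1 - r) * jp ζ ^ (r - 1) := by
        rw [Real.div_rpow pζ.le (by norm_num), div_eq_mul_inv, ← Real.rpow_neg (by norm_num)]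
        rw [mul_comm]; congr 2; ring
      rw [e2] at h2
      have h3 : ‖ζ‖ ≤ jp ζ := by unfold jp; linarith
      have e3 : jp ζ * jp ζ ^ (r - 1) = jp ζ ^ r := by
        rw [Real.rpow_sub_one pζ.ne']; field_simp
      have h5 : 0 ≤ (jp (ξ + s • ζ))⁻¹ ^ k := pow_nonneg (inv_pos.2 (jp_pos _)).le _
      have h6 : 0 ≤ jp (ξ + s • ζ) ^ (r - 1) := Real.rpow_nonneg pp.le _
      have h4 := shQ s hs
      calc ‖ζ‖ * ((∑ j, B j) * (jp (ξ + s • ζ) ^ (r - 1) * (jp (ξ + s • ζ))⁻¹ ^ k))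
          ≤ jp ζ * ((∑ j, B j) * ((4 ^ (1 - r) * jp ζ ^ (r - 1)) * Q)) := by gcongr
        _ = 4 ^ (1 - r) * (∑ j, B j) * ((jp ζ * jp ζ ^ (r - 1)) * Q) := by ring
        _ = _ := by rw [e3]
    have hmv := norm_image_sub_le_of_norm_deriv_le_segment' (a := 0) (b := t)
      (fun s _ => (hder s).hasDerivWithinAt)
      (fun s hs => hbd s ⟨hs.1, hs.2.le.trans ht.2⟩) t ⟨ht.1, le_rfl⟩
    rw [zero_smul, add_zero, sub_zero] at hmv
    refine hmv.trans ?_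
    have h3 : 0 ≤ 4 ^ (1 - r) * (∑ j, B j) * (jp ζ ^ r * Q) := by positivity
    have h4 : 0 ≤ C * (3 ^ r + 2 ^ r) * (jp ζ ^ r * Q) := by positivity
    nlinarith [h3, h4, ht.2]

lemma expI_cls {r : ℝ} (hr : r ∈ Set.Ico (0 : ℝ) 1) {φ : VV d → ℂ} (hφ : PSym r φ)
    (hre : ∀ q, (φ q).im = 0)
    {K : Set (Fin d → ℝ)} (hK : IsCompact K) (n : ℕ) :
    Cls (SK K) (om r) n (fun _ => 1)
      (fun p q => Complex.exp (Complex.I * (φ q - φ (q + (0, p.2 • p.1))))) := by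
  have hs1 : ∀ p : PP d, ContDiff ℝ (⊤ : ℕ∞) (fun q : VV d => φ (q + (0, p.2 • p.1))) :=
    fun p => hφ.smooth.comp (contDiff_id.add contDiff_const)
  have hs : ∀ p : PP d, ContDiff ℝ (⊤ : ℕ∞) (fun q : VV d => φ q - φ (q + (0, p.2 • p.1))) :=
    fun p => hφ.smooth.sub (hs1 p)
  refine Cls.exp (om_nonneg r _) hs (fun i n => ⟨fun p => contDiff_dirDeriv (hs p) _, fun L _ => ?_⟩)
    (fun p q => ?_) n
  · obtain ⟨C, hC, hb⟩ := psi_bound hr hφ hK (i :: L)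
    refine ⟨C, hC, ?_⟩
    intro z hz
    rw [← DL_cons (hs _)]
    have e : DL (i :: L) (fun q : VV d => φ q - φ (q + (0, z.1.2 • z.1.1))) z.2 =
        -(DL (i :: L) φ (z.2 + (0, z.1.2 • z.1.1)) - DL (i :: L) φ z.2) := by
      have h1 : (fun q : VV d => φ q - φ (q + (0, z.1.2 • z.1.1))) =
          fun q => φ q + (-ContinuousLinearMap.id ℝ ℂ) (φ (q + (0, z.1.2 • z.1.1))) := by
        funext q; simp [sub_eq_add_neg]
      rw [h1]
      have h2 := dirDerivList_add hφ.smooth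
        ((-ContinuousLinearMap.id ℝ ℂ).contDiff.comp (hs1 z.1)) ((i :: L).map ebas)
      have h3 := dirDerivList_clm_comp (hs1 z.1) (-ContinuousLinearMap.id ℝ ℂ) ((i :: L).map ebas)
      have h4 := DL_shift hφ.smooth (i :: L) (0, z.1.2 • z.1.1) z.2
      have h5 := congrFun h2 z.2
      simp only [Function.comp_def] at h5
      unfold DL at h4 ⊢
      rw [h5, h3]
      beta_reduce
      rw [h4]
      simp only [ContinuousLinearMap.neg_apply, ContinuousLinearMap.id_apply]
      ring
    rw [e, norm_neg]
    refine (hb z hz).trans (mul_le_mul_of_nonneg_left ?_ hC)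
    have h1 := om_prod_ge hr.1 L z
    have hZ0 : 0 ≤ jp z.1.1 ^ r := Real.rpow_nonneg (jp_pos _).le _
    have hi : 0 ≤ (jp z.2.2)⁻¹ := (inv_pos.2 (jp_pos _)).le
    have hj := (jp_pos z.1.1).le
    cases i with
    | inl i =>
      have : nr (Sum.inl i :: L) = nr L := by simp [nr, List.countP_cons]
      rw [this]
      exact mul_le_mul_of_nonneg_left h1 hZ0
    | inr i =>
      have : nr (Sum.inr i :: L) = nr L + 1 := by simp [nr, List.countP_cons]
      rw [this, pow_succ]
      have h2 : jp z.1.1 ^ r ≤ jp z.1.1 := by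
        have := Real.rpow_le_rpow_of_exponent_le (one_le_jp z.1.1) hr.2.le
        simpa using this
      calc jp z.1.1 ^ r * ((jp z.1.1 * (jp z.2.2)⁻¹) ^ nr L * (jp z.1.1 * (jp z.2.2)⁻¹))
          ≤ jp z.1.1 * ((L.map (fun i => om r i z)).prod * (jp z.1.1 * (jp z.2.2)⁻¹)) := by
            gcongr
        _ = _ := by simp only [om, wt]; ring
  · rw [Complex.norm_exp]
    simp [Complex.mul_re, hre]

/-- The amplitude family `a₁(y,ξ) conj(a₂(y,ξ+tζ))`. -/
noncomputable def gfam {d : ℕ} (a₁ a₂ : VV d → ℂ) (p : PP d) (q : VV d) : ℂ :=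
  a₁ q * (starRingEnd ℂ) (a₂ (q + (0, p.2 • p.1)))

lemma gfam_cls {r m₁ m₂ : ℝ} (hr : r ∈ Set.Ico (0 : ℝ) 1) {φ b c : VV d → ℂ} (hφ : PSym r φ)
    (hre : ∀ q, (φ q).im = 0) (hb : PSym m₁ b) (hc : PSym m₂ c)
    {K : Set (Fin d → ℝ)} (hK : IsCompact K) (n : ℕ) :
    Cls (SK K) (om r) n (fun z => jp z.2.2 ^ (m₁ + m₂) * jp z.1.1 ^ (|m₁| + |m₂|))
      (gfam (fun q => Complex.exp (Complex.I * φ q) * b q)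
        (fun q => Complex.exp (Complex.I * φ q) * c q)) := by
  have h1 := hb.shift_cls hr.1 hK (fun _ => 0) (by simp) n
  have h2 := (hc.shift_cls hr.1 hK (fun t => t) (by simp) n).conj
  have h3 := expI_cls hr hφ hre hK n
  have hW : ∀ s : ℝ, ∀ z ∈ SK K, 0 ≤ jp z.2.2 ^ s * jp z.1.1 ^ |s| := fun s z _ =>
    mul_nonneg (Real.rpow_nonneg (jp_pos _).le _) (Real.rpow_nonneg (jp_pos _).le _)
  have h4 := Cls.mul (om_nonneg r _) (fun z _ => zero_le_one) h3
    (Cls.mul (om_nonneg r _) (hW m₁) h1 h2)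
  have h5 := h4.mono (om_nonneg r _) (W' := fun z => jp z.2.2 ^ (m₁ + m₂) * jp z.1.1 ^ (|m₁| + |m₂|))
    zero_le_one (fun z _ => le_of_eq (by
      rw [Real.rpow_add (jp_pos _), Real.rpow_add (jp_pos _)]; ring))
  convert h5 using 1
  funext p q
  unfold gfam
  simp only [zero_smul, map_mul, ← Complex.exp_conj]
  have e : (starRingEnd ℂ) (φ (q + (0, p.2 • p.1))) = φ (q + (0, p.2 • p.1)) :=
    Complex.conj_eq_iff_im.2 (hre _)
  rw [e, Complex.conj_I, mul_sub, sub_eq_add_neg, Complex.exp_add]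
  have e2 : q + ((0 : Fin d → ℝ), (0 : Fin d → ℝ)) = q := by
    rw [← Prod.zero_eq_mk, add_zero]
  rw [e2]
  ring_nf
end gfamily

open MeasureTheory Filter Topology
section compactParam
variable {H E F : Type} [NormedAddCommGroup H] [NormedSpace ℝ H]
  [NormedAddCommGroup E] [NormedSpace ℝ E]
  [NormedAddCommGroup F] [NormedSpace ℝ F] [MeasurableSpace E] [BorelSpace E]
  {μ : Measure E} [IsFiniteMeasureOnCompacts μ] [FiniteDimensional ℝ H] [FiniteDimensional ℝ E]

lemma hasFDerivAt_compact_integral {f : H × E → F} (hf : ContDiff ℝ 1 f)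
    {K : Set E} (hK : IsCompact K) (q : H) :
    HasFDerivAt (fun q => ∫ y in K, f (q, y) ∂μ)
      (∫ y in K, (fderiv ℝ f (q, y)).comp (ContinuousLinearMap.inl ℝ H E) ∂μ) q := by
  have hc : Continuous (fun z : H × E => (fderiv ℝ f z).comp (ContinuousLinearMap.inl ℝ H E)) :=
    (hf.continuous_fderiv (by simp)).clm_comp continuous_const
  have : ProperSpace H := FiniteDimensional.proper ℝ H
  have hcomp : IsCompact (Metric.closedBall q 1 ×ˢ K) := (isCompact_closedBall q 1).prod hK
  obtain ⟨C, hC⟩ := hcomp.exists_bound_of_continuousOn hc.continuousOn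
  have hfc := hf.continuous
  have hcy : ∀ q', Continuous fun y => f (q', y) := fun q' => hfc.comp (by fun_prop)
  refine hasFDerivAt_integral_of_dominated_of_fderiv_le (μ := μ.restrict K)
    (F := fun q y => f (q, y))
    (F' := fun q y => (fderiv ℝ f (q, y)).comp (ContinuousLinearMap.inl ℝ H E))
    (bound := fun _ => C) (Metric.closedBall_mem_nhds q one_pos) ?_ ?_ ?_ ?_ ?_ ?_
  · exact Eventually.of_forall fun q' => (hcy q').aestronglyMeasurable
  · exact (hcy q).continuousOn.integrableOn_compact hK
  · exact (hc.comp (by fun_prop : Continuous fun y => (q, y))).aestronglyMeasurable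
  · refine (ae_restrict_iff' hK.measurableSet).2 (Eventually.of_forall fun y hy q' hq' => ?_)
    exact hC (q', y) ⟨hq', hy⟩
  · exact continuousOn_const.integrableOn_compact hK
  · refine Eventually.of_forall fun y q' _ => ?_
    have h1 : HasFDerivAt (fun q' : H => (q', y)) (ContinuousLinearMap.inl ℝ H E) q' :=
      hasFDerivAt_prodMk_left q' y
    exact ((hf.differentiable (by simp)) (q', y)).hasFDerivAt.comp q' h1

lemma contDiff_compact_integral_nat (n : ℕ) : ∀ {F : Type} [NormedAddCommGroup F] [NormedSpace ℝ F]
    {f : H × E → F} (_ : ContDiff ℝ (⊤ : ℕ∞) f)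
    {K : Set E} (_ : IsCompact K), ContDiff ℝ n (fun q => ∫ y in K, f (q, y) ∂μ) := by
  induction n with
  | zero =>
    intro F _ _ f hf K hK
    refine contDiff_zero.2 (continuous_iff_continuousAt.2 fun q => ?_)
    exact (hasFDerivAt_compact_integral (hf.of_le (by exact_mod_cast le_top)) hK q).continuousAt
  | succ n ih =>
    intro F _ _ f hf K hK
    have hf1 : ContDiff ℝ 1 f := hf.of_le (by exact_mod_cast le_top)
    rw [show ((n + 1 : ℕ) : WithTop ℕ∞) = (n : WithTop ℕ∞) + 1 by norm_cast,
      contDiff_succ_iff_fderiv]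
    refine ⟨fun q => (hasFDerivAt_compact_integral hf1 hK q).differentiableAt, by simp, ?_⟩
    have e : fderiv ℝ (fun q => ∫ y in K, f (q, y) ∂μ) = fun q => ∫ y in K,
        (fun z : H × E => (fderiv ℝ f z).comp (ContinuousLinearMap.inl ℝ H E)) (q, y) ∂μ := by
      funext q
      exact (hasFDerivAt_compact_integral hf1 hK q).fderiv
    rw [e]
    exact ih ((hf.fderiv_right (by simp)).clm_comp contDiff_const) hK

lemma contDiff_compact_integral {f : H × E → F} (hf : ContDiff ℝ (⊤ : ℕ∞) f)
    {K : Set E} (hK : IsCompact K) :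
    ContDiff ℝ (⊤ : ℕ∞) (fun q => ∫ y in K, f (q, y) ∂μ) :=
  contDiff_infty.2 fun n => contDiff_compact_integral_nat n hf hK

lemma dirDeriv_compact_integral [CompleteSpace F] {f : H × E → F} (hf : ContDiff ℝ (⊤ : ℕ∞) f)
    {K : Set E} (hK : IsCompact K) (v : H) :
    dirDeriv v (fun q => ∫ y in K, f (q, y) ∂μ) =
      fun q => ∫ y in K, dirDeriv (v, 0) f (q, y) ∂μ := by
  have hf1 : ContDiff ℝ 1 f := hf.of_le (by exact_mod_cast le_top)
  funext q
  unfold dirDeriv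
  rw [(hasFDerivAt_compact_integral hf1 hK q).fderiv, ContinuousLinearMap.integral_apply]
  · rfl
  · have hc : Continuous (fun z : H × E => (fderiv ℝ f z).comp (ContinuousLinearMap.inl ℝ H E)) :=
      (hf1.continuous_fderiv (by simp)).clm_comp continuous_const
    exact (hc.comp (by fun_prop : Continuous fun y => (q, y))).continuousOn.integrableOn_compact hK

lemma dirDerivList_compact_integral [CompleteSpace F] {f : H × E → F}
    (hf : ContDiff ℝ (⊤ : ℕ∞) f) {K : Set E} (hK : IsCompact K) (l : List H) :
    dirDerivList l (fun q => ∫ y in K, f (q, y) ∂μ) =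
      fun q => ∫ y in K, dirDerivList (l.map fun v => (v, (0 : E))) f (q, y) ∂μ := by
  induction l with
  | nil => rfl
  | cons v l ih =>
    simp only [dirDerivList, ih, List.map_cons]
    exact dirDeriv_compact_integral (contDiff_dirDerivList hf _) hK v
end compactParam

section fourier
variable {d : ℕ}

/-- Fourier kernel. -/
noncomputable def ek {d : ℕ} (y ζ : Fin d → ℝ) : ℂ := Complex.exp (-(Complex.I * (dotp y ζ : ℂ)))

lemma dotp_eq {d : ℕ} : (fun z : VV d => dotp z.1 z.2) = fun z : VV d => ∑ i, z.1 i * z.2 i := rfl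

lemma contDiff_dotp : ContDiff ℝ (⊤ : ℕ∞) (fun z : VV d => dotp z.1 z.2) := by
  unfold dotp
  fun_prop

lemma contDiff_ek : ContDiff ℝ (⊤ : ℕ∞) (fun z : VV d => ek z.1 z.2) := by
  unfold ek
  exact (contDiff_const.mul (Complex.ofRealCLM.contDiff.comp contDiff_dotp)).neg.cexp

lemma norm_ek (y ζ : Fin d → ℝ) : ‖ek y ζ‖ = 1 := by
  unfold ek
  rw [Complex.norm_exp]; simp

lemma contDiff_ek_left (ζ : Fin d → ℝ) : ContDiff ℝ (⊤ : ℕ∞) (fun y => ek y ζ) :=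
  contDiff_ek.comp (contDiff_id.prodMk contDiff_const)

lemma dotp_single (j : Fin d) (ζ : Fin d → ℝ) : dotp (Pi.single j 1) ζ = ζ j := by
  unfold dotp
  simp [Pi.single_apply]

lemma dotp_add_left (x y ζ : Fin d → ℝ) : dotp (x + y) ζ = dotp x ζ + dotp y ζ := by
  unfold dotp; simp [add_mul, Finset.sum_add_distrib]

lemma dotp_neg_left (x ζ : Fin d → ℝ) : dotp (-x) ζ = - dotp x ζ := by
  unfold dotp; simp

lemma dotp_sub_left (x y ζ : Fin d → ℝ) : dotp (x - y) ζ = dotp x ζ - dotp y ζ := by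
  unfold dotp; simp [sub_mul, Finset.sum_sub_distrib]

lemma dotp_comm (x y : Fin d → ℝ) : dotp x y = dotp y x := by
  unfold dotp; simp [mul_comm]

/-- The dot product as a continuous linear map. -/
noncomputable def dotpL {d : ℕ} (ζ : Fin d → ℝ) : (Fin d → ℝ) →L[ℝ] ℝ :=
  ∑ i, ζ i • ContinuousLinearMap.proj i

lemma dotpL_apply (ζ y : Fin d → ℝ) : dotpL ζ y = dotp y ζ := by
  unfold dotpL dotp
  simp [mul_comm]

lemma dirDeriv_ek (ζ v : Fin d → ℝ) :
    dirDeriv v (fun y => ek y ζ) = fun y => -(Complex.I * (dotp v ζ : ℂ)) * ek y ζ := by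
  have h1 : (fun y => ek y ζ) = fun y => Complex.exp (Complex.I *
      ((Complex.ofRealCLM.comp (-dotpL ζ)) y)) := by
    funext y
    simp [ek, dotpL_apply]
  rw [h1, dirDeriv_exp (ContinuousLinearMap.differentiable _)]
  funext y
  unfold dirDeriv
  rw [ContinuousLinearMap.fderiv]
  simp [dotpL_apply, ek]

/-- Fourier integral. -/
noncomputable def ft {d : ℕ} (f : (Fin d → ℝ) → ℂ) (ζ : Fin d → ℝ) : ℂ := ∫ y, ek y ζ * f y

lemma ek_mul_integrable {f : (Fin d → ℝ) → ℂ} (hf : Integrable f) (ζ : Fin d → ℝ) :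
    Integrable (fun y => ek y ζ * f y) := by
  refine hf.bdd_mul (c := 1) (contDiff_ek_left ζ).continuous.aestronglyMeasurable ?_
  exact Eventually.of_forall fun y => (norm_ek y ζ).le

lemma ft_dirDeriv {f : (Fin d → ℝ) → ℂ} (hf : Differentiable ℝ f) (v : Fin d → ℝ)
    (h1 : Integrable f) (h2 : Integrable (dirDeriv v f)) (ζ : Fin d → ℝ) :
    ft (dirDeriv v f) ζ = Complex.I * (dotp v ζ : ℂ) * ft f ζ := by
  unfold ft
  have hd := dirDeriv_ek (d := d) ζ v
  have e : ∀ y, fderiv ℝ (fun y => ek y ζ) y v = -(Complex.I * (dotp v ζ : ℂ)) * ek y ζ :=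
    fun y => congrFun hd y
  have := integral_mul_fderiv_eq_neg_fderiv_mul_of_integrable (μ := (volume : Measure (Fin d → ℝ)))
    (f := fun y => ek y ζ) (g := f) (v := v) ?_ ?_ ?_ ?_ ?_
  · unfold dirDeriv
    rw [this, ← integral_const_mul, ← integral_neg]
    congr 1; funext y
    rw [e]; ring
  · simp_rw [e, mul_assoc]
    exact (ek_mul_integrable h1 ζ).const_mul _
  · exact ek_mul_integrable h2 ζ
  · exact ek_mul_integrable h1 ζ
  · exact fun x _ => smooth_differentiable (contDiff_ek_left ζ) x
  · exact fun x _ => hf x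

lemma ft_dirDerivList {f : (Fin d → ℝ) → ℂ} (hf : ContDiff ℝ (⊤ : ℕ∞) f)
    (hi : ∀ l : List (Fin d → ℝ), Integrable (dirDerivList l f)) (l : List (Fin d → ℝ))
    (ζ : Fin d → ℝ) :
    ft (dirDerivList l f) ζ = (l.map fun v => Complex.I * (dotp v ζ : ℂ)).prod * ft f ζ := by
  induction l with
  | nil => simp [dirDerivList]
  | cons v l ih =>
    simp only [dirDerivList, List.map_cons, List.prod_cons]
    rw [ft_dirDeriv (smooth_differentiable (contDiff_dirDerivList hf l)) v (hi l) (hi (v :: l)), ih]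
    ring

lemma norm_ft_le (f : (Fin d → ℝ) → ℂ) (ζ : Fin d → ℝ) : ‖ft f ζ‖ ≤ ∫ y, ‖f y‖ := by
  unfold ft
  refine (norm_integral_le_integral_norm _).trans (le_of_eq ?_)
  simp [norm_ek]

lemma ft_decay {f : (Fin d → ℝ) → ℂ} (hf : ContDiff ℝ (⊤ : ℕ∞) f)
    (hi : ∀ l : List (Fin d → ℝ), Integrable (dirDerivList l f)) (N : ℕ) {B : ℝ}
    (h0 : ∫ y, ‖f y‖ ≤ B)
    (hB : ∀ j, ∫ y, ‖dirDerivList (List.replicate N (Pi.single j 1)) f y‖ ≤ B) (ζ : Fin d → ℝ) :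
    jp ζ ^ N * ‖ft f ζ‖ ≤ 2 ^ N * B := by
  have hB0 : 0 ≤ B := le_trans (integral_nonneg fun _ => norm_nonneg _) h0
  by_cases hz : ‖ζ‖ ≤ 1
  · have h1 : jp ζ ≤ 2 := by unfold jp; linarith
    exact mul_le_mul (pow_le_pow_left₀ (jp_pos _).le h1 _) ((norm_ft_le f ζ).trans h0)
      (norm_nonneg _) (by positivity)
  · push Not at hz
    have : ∃ j, ‖ζ‖ = |ζ j| := by
      by_contra hcon
      push Not at hcon
      have h2 : ‖ζ‖ < ‖ζ‖ := by
        rw [pi_norm_lt_iff (by linarith)]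
        exact fun j => lt_of_le_of_ne (norm_le_pi_norm ζ j) (hcon j).symm
      exact lt_irrefl _ h2
    obtain ⟨j, hj⟩ := this
    have h3 := ft_dirDerivList hf hi (List.replicate N (Pi.single j 1)) ζ
    have h4 := (norm_ft_le (dirDerivList (List.replicate N (Pi.single j 1)) f) ζ).trans (hB j)
    rw [h3, norm_mul] at h4
    simp only [List.map_replicate, List.prod_replicate, dotp_single, norm_pow, norm_mul,
      Complex.norm_I, one_mul, Complex.norm_real, Real.norm_eq_abs, ← hj] at h4
    have h5 : jp ζ ^ N ≤ 2 ^ N * ‖ζ‖ ^ N := by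
      rw [← mul_pow]
      exact pow_le_pow_left₀ (jp_pos _).le (by unfold jp; linarith) _
    calc jp ζ ^ N * ‖ft f ζ‖ ≤ (2 ^ N * ‖ζ‖ ^ N) * ‖ft f ζ‖ := by gcongr
      _ = 2 ^ N * (‖ζ‖ ^ N * ‖ft f ζ‖) := by ring
      _ ≤ _ := by gcongr
end fourier

open MeasureTheory Filter Topology
set_option linter.unusedSectionVars false
section domParam
variable {d : ℕ} {E : Type} [NormedAddCommGroup E] [NormedSpace ℝ E]
  [MeasurableSpace E] [BorelSpace E] [SecondCountableTopology E] {μ : Measure E}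

lemma ebas_expand (v : VV d) :
    v = ∑ i, (Sum.elim v.1 v.2 i) • ebas (d := d) i := by
  have h1 : ∀ w : Fin d → ℝ, w = ∑ j, w j • (Pi.single j 1 : Fin d → ℝ) := by
    intro w; funext k; simp [Finset.sum_apply, Pi.single_apply]
  rw [Fintype.sum_sum_type]
  refine Prod.ext ?_ ?_
  · simpa [Prod.fst_sum, ebas] using h1 v.1
  · simpa [Prod.snd_sum, ebas] using h1 v.2

lemma norm_clm_le_ebas {F : Type} [NormedAddCommGroup F] [NormedSpace ℝ F] (T : VV d →L[ℝ] F) :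
    ‖T‖ ≤ ∑ i, ‖T (ebas i)‖ := by
  refine T.opNorm_le_bound (Finset.sum_nonneg fun _ _ => norm_nonneg _) fun v => ?_
  conv_lhs => rw [ebas_expand v]
  rw [map_sum, Finset.sum_mul]
  refine norm_sum_le_of_le _ fun i _ => ?_
  rw [map_smul, norm_smul, mul_comm]
  refine mul_le_mul_of_nonneg_left ?_ (norm_nonneg _)
  rcases i with i | i
  · exact (norm_le_pi_norm v.1 i).trans (norm_fst_le v)
  · exact (norm_le_pi_norm v.2 i).trans (norm_snd_le v)

/-- Derivatives in the first group of variables. -/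
noncomputable def PDL (L : List (Fin d ⊕ Fin d)) (f : VV d × E → ℂ) : VV d × E → ℂ :=
  dirDerivList (L.map fun i => (ebas i, (0 : E))) f

/-- Local domination of all derivatives. -/
def Dom (μ : Measure E) (f : VV d × E → ℂ) : Prop :=
  ∀ (L : List (Fin d ⊕ Fin d)) (K : Set (VV d)), IsCompact K → ∃ B : E → ℝ, Integrable B μ ∧
    ∀ᵐ z ∂μ, ∀ q ∈ K, ‖PDL L f (q, z)‖ ≤ B z

lemma PDL_cons {f : VV d × E → ℂ} (hf : ContDiff ℝ (⊤ : ℕ∞) f) (i : Fin d ⊕ Fin d) (L) :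
    PDL (i :: L) f = PDL L (dirDeriv (ebas i, (0 : E)) f) := by
  unfold PDL
  rw [List.map_cons, dirDerivList_cons' hf]

lemma PDL_slice {f : VV d × E → ℂ} (hf : ContDiff ℝ (⊤ : ℕ∞) f) (L) (z : E) (q : VV d) :
    PDL L f (q, z) = DL L (fun q => f (q, z)) q := by
  have := congrFun (dirDerivList_comp_affine hf (ContinuousLinearMap.inl ℝ (VV d) E) (0, z)
    (L.map ebas)) q
  simp at this
  unfold DL PDL
  rw [this]
  congr 1

lemma Dom.dirDeriv {f : VV d × E → ℂ} (hf : ContDiff ℝ (⊤ : ℕ∞) f) (h : Dom μ f)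
    (i : Fin d ⊕ Fin d) : Dom μ (dirDeriv (ebas i, (0 : E)) f) := by
  intro L K hK
  have := h (i :: L) K hK
  rwa [PDL_cons hf] at this

lemma Dom.integrable {f : VV d × E → ℂ} (hf : ContDiff ℝ (⊤ : ℕ∞) f) (h : Dom μ f) (q : VV d) :
    Integrable (fun z => f (q, z)) μ := by
  obtain ⟨B, hB, hb⟩ := h [] {q} isCompact_singleton
  refine hB.mono' (hf.continuous.comp (by fun_prop)).aestronglyMeasurable ?_
  filter_upwards [hb] with z hz
  exact hz q rfl

lemma Dom.hasFDerivAt {f : VV d × E → ℂ} (hf : ContDiff ℝ (⊤ : ℕ∞) f) (h : Dom μ f) (q : VV d) :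
    Integrable (fun z => (fderiv ℝ f (q, z)).comp (ContinuousLinearMap.inl ℝ (VV d) E)) μ ∧
    HasFDerivAt (fun q => ∫ z, f (q, z) ∂μ)
      (∫ z, (fderiv ℝ f (q, z)).comp (ContinuousLinearMap.inl ℝ (VV d) E) ∂μ) q := by
  have hc : Continuous (fun z : VV d × E => (fderiv ℝ f z).comp (ContinuousLinearMap.inl ℝ (VV d) E)) :=
    (hf.continuous_fderiv (by simp)).clm_comp continuous_const
  choose B hB hb using fun i => h [i] (Metric.closedBall q 1) (isCompact_closedBall q 1)
  have hbd : ∀ᵐ z ∂μ, ∀ q' ∈ Metric.closedBall q 1,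
      ‖(fderiv ℝ f (q', z)).comp (ContinuousLinearMap.inl ℝ (VV d) E)‖ ≤ ∑ i, B i z := by
    filter_upwards [ae_all_iff.2 hb] with z hz q' hq'
    refine (norm_clm_le_ebas _).trans (Finset.sum_le_sum fun i _ => ?_)
    exact hz i q' hq'
  have hBi : Integrable (fun z => ∑ i, B i z) μ := integrable_finsetSum _ fun i _ => hB i
  have hm := (hc.comp (by fun_prop : Continuous fun z => (q, z))).aestronglyMeasurable (μ := μ)
  refine ⟨hBi.mono' hm ?_, ?_⟩
  · filter_upwards [hbd] with z hz
    exact hz q (Metric.mem_closedBall_self zero_le_one)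
  refine hasFDerivAt_integral_of_dominated_of_fderiv_le (μ := μ)
    (F := fun q y => f (q, y))
    (F' := fun q y => (fderiv ℝ f (q, y)).comp (ContinuousLinearMap.inl ℝ (VV d) E))
    (bound := fun z => ∑ i, B i z) (Metric.closedBall_mem_nhds q one_pos) ?_ ?_ hm hbd hBi ?_
  · exact Eventually.of_forall fun q' => (hf.continuous.comp (by fun_prop)).aestronglyMeasurable
  · exact h.integrable hf q
  · refine Eventually.of_forall fun y q' _ => ?_
    have h1 : HasFDerivAt (fun q' : VV d => (q', y)) (ContinuousLinearMap.inl ℝ (VV d) E) q' :=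
      hasFDerivAt_prodMk_left q' y
    exact ((hf.differentiable (by simp)) (q', y)).hasFDerivAt.comp q' h1

lemma Dom.dirDeriv_integral {f : VV d × E → ℂ} (hf : ContDiff ℝ (⊤ : ℕ∞) f) (h : Dom μ f)
    (i : Fin d ⊕ Fin d) :
    _root_.dirDeriv (ebas i) (fun q => ∫ z, f (q, z) ∂μ) =
      fun q => ∫ z, _root_.dirDeriv (ebas i, (0 : E)) f (q, z) ∂μ := by
  funext q
  obtain ⟨h1, h2⟩ := h.hasFDerivAt hf q
  unfold _root_.dirDeriv
  rw [h2.fderiv, ContinuousLinearMap.integral_apply h1]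
  rfl

lemma Dom.contDiff_nat (n : ℕ) : ∀ {f : VV d × E → ℂ}, ContDiff ℝ (⊤ : ℕ∞) f → Dom μ f →
    ContDiff ℝ n (fun q => ∫ z, f (q, z) ∂μ) := by
  induction n with
  | zero =>
    intro f hf h
    refine contDiff_zero.2 (continuous_iff_continuousAt.2 fun q => ?_)
    exact (h.hasFDerivAt hf q).2.continuousAt
  | succ n ih =>
    intro f hf h
    rw [show ((n + 1 : ℕ) : WithTop ℕ∞) = (n : WithTop ℕ∞) + 1 by norm_cast,
      contDiff_succ_iff_fderiv]
    refine ⟨fun q => (h.hasFDerivAt hf q).2.differentiableAt, by simp, ?_⟩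
    rw [contDiff_clm_apply_iff]
    intro v
    have e : (fun q => fderiv ℝ (fun q => ∫ z, f (q, z) ∂μ) q v) = fun q =>
        ∑ i, (Sum.elim v.1 v.2 i) • ∫ z, _root_.dirDeriv (ebas i, (0 : E)) f (q, z) ∂μ := by
      funext q
      conv_lhs => rw [ebas_expand v]
      rw [map_sum]
      refine Finset.sum_congr rfl fun i _ => ?_
      rw [map_smul]
      congr 1
      exact congrFun (h.dirDeriv_integral hf i) q
    rw [e]
    exact ContDiff.sum fun i _ => ContDiff.const_smul _ (ih (contDiff_dirDeriv hf _) (h.dirDeriv hf i))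

lemma Dom.contDiff {f : VV d × E → ℂ} (hf : ContDiff ℝ (⊤ : ℕ∞) f) (h : Dom μ f) :
    ContDiff ℝ (⊤ : ℕ∞) (fun q => ∫ z, f (q, z) ∂μ) :=
  contDiff_infty.2 fun n => Dom.contDiff_nat n hf h

lemma Dom.DL_integral (L : List (Fin d ⊕ Fin d)) : ∀ {f : VV d × E → ℂ},
    ContDiff ℝ (⊤ : ℕ∞) f → Dom μ f →
    DL L (fun q => ∫ z, f (q, z) ∂μ) = fun q => ∫ z, PDL L f (q, z) ∂μ := by
  induction L with
  | nil => intro f _ _; rfl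
  | cons i L ih =>
    intro f hf h
    rw [DL_cons (h.contDiff hf), h.dirDeriv_integral hf, ih (contDiff_dirDeriv hf _) (h.dirDeriv hf i),
      PDL_cons hf]
end domParam

open MeasureTheory Filter Topology
section FTsec
variable {d : ℕ}

/-- Partial Fourier integral of a family. -/
noncomputable def FT {d : ℕ} (g : PP d → VV d → ℂ) (p : PP d) (ξ : Fin d → ℝ) : ℂ :=
  ft (fun y => g p (y, ξ)) p.1

lemma ft_eq_compact {f : (Fin d → ℝ) → ℂ} {K : Set (Fin d → ℝ)} (hz : ∀ y ∉ K, f y = 0) (ζ) :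
    ft f ζ = ∫ y in K, ek y ζ * f y := by
  unfold ft
  refine (setIntegral_eq_integral_of_forall_compl_eq_zero fun y hy => ?_).symm
  rw [hz y hy, mul_zero]

lemma FT_smooth {g : PP d → VV d → ℂ} {K : Set (Fin d → ℝ)} (hK : IsCompact K)
    (hJ : ContDiff ℝ (⊤ : ℕ∞) (fun w : PP d × VV d => g w.1 w.2))
    (hZ : ∀ p q, q.1 ∉ K → g p q = 0) :
    ContDiff ℝ (⊤ : ℕ∞) (fun w : PP d × (Fin d → ℝ) => FT g w.1 w.2) := by
  have e : (fun w : PP d × (Fin d → ℝ) => FT g w.1 w.2) = fun w => ∫ y in K,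
      (fun v : (PP d × (Fin d → ℝ)) × (Fin d → ℝ) => ek v.2 v.1.1.1 * g v.1.1 (v.2, v.1.2)) (w, y) := by
    funext w
    exact ft_eq_compact (fun y hy => hZ _ _ hy) _
  rw [e]
  refine contDiff_compact_integral (f := fun v : (PP d × (Fin d → ℝ)) × (Fin d → ℝ) =>
    ek v.2 v.1.1.1 * g v.1.1 (v.2, v.1.2)) (ContDiff.mul ?_ ?_) hK
  · exact contDiff_ek.comp (g := fun z : VV d => ek z.1 z.2)
      (f := fun v : (PP d × (Fin d → ℝ)) × (Fin d → ℝ) => (v.2, v.1.1.1)) (by fun_prop)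
  · exact hJ.comp (g := fun w : PP d × VV d => g w.1 w.2)
      (f := fun v : (PP d × (Fin d → ℝ)) × (Fin d → ℝ) => (v.1.1, (v.2, v.1.2))) (by fun_prop)

lemma slice_snd {f : VV d → ℂ} (hf : ContDiff ℝ (⊤ : ℕ∞) f) (l : List (Fin d)) (y ξ : Fin d → ℝ) :
    dirDerivList (l.map fun i => Pi.single i (1 : ℝ)) (fun ξ => f (y, ξ)) ξ =
      DL (l.map Sum.inr) f (y, ξ) := by
  have := congrFun (dirDerivList_comp_affine hf (ContinuousLinearMap.inr ℝ (Fin d → ℝ) (Fin d → ℝ))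
    (y, 0) (l.map fun i => Pi.single i (1 : ℝ))) ξ
  simp at this
  rw [this]
  unfold DL
  rw [List.map_map]
  congr 1

lemma slice_fst {f : VV d → ℂ} (hf : ContDiff ℝ (⊤ : ℕ∞) f) (l : List (Fin d)) (y ξ : Fin d → ℝ) :
    dirDerivList (l.map fun i => Pi.single i (1 : ℝ)) (fun y => f (y, ξ)) y =
      DL (l.map Sum.inl) f (y, ξ) := by
  have := congrFun (dirDerivList_comp_affine hf (ContinuousLinearMap.inl ℝ (Fin d → ℝ) (Fin d → ℝ))
    (0, ξ) (l.map fun i => Pi.single i (1 : ℝ))) y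
  simp at this
  rw [this]
  unfold DL
  rw [List.map_map]
  congr 1

lemma contDiff_DL {f : VV d → ℂ} (hf : ContDiff ℝ (⊤ : ℕ∞) f) (L : List (Fin d ⊕ Fin d)) :
    ContDiff ℝ (⊤ : ℕ∞) (DL L f) := contDiff_dirDerivList hf _

lemma DL_append (L L' : List (Fin d ⊕ Fin d)) (f : VV d → ℂ) :
    DL (L ++ L') f = DL L (DL L' f) := by
  unfold DL
  rw [List.map_append, dirDerivList_append]

lemma DL_zero_off {f : VV d → ℂ} {K : Set (Fin d → ℝ)} (hK : IsClosed K)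
    (hz : ∀ q : VV d, q.1 ∉ K → f q = 0) (L : List (Fin d ⊕ Fin d)) (q : VV d) (hq : q.1 ∉ K) :
    DL L f q = 0 :=
  dirDerivList_zero_of_eqOn_open (U := {q : VV d | q.1 ∉ K})
    (hK.isOpen_compl.preimage continuous_fst) (fun q hq => hz q hq) _ q hq

lemma FT_dirDerivList {g : PP d → VV d → ℂ} {K : Set (Fin d → ℝ)} (hK : IsCompact K)
    (hs : ∀ p, ContDiff ℝ (⊤ : ℕ∞) (g p)) (hZ : ∀ p q, q.1 ∉ K → g p q = 0)
    (p : PP d) (l : List (Fin d)) (ξ : Fin d → ℝ) :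
    dirDerivList (l.map fun i => Pi.single i (1 : ℝ)) (FT g p) ξ =
      FT (fun p => DL (l.map Sum.inr) (g p)) p ξ := by
  have e : FT g p = fun ξ => ∫ y in K,
      (fun v : (Fin d → ℝ) × (Fin d → ℝ) => ek v.2 p.1 * g p (v.2, v.1)) (ξ, y) := by
    funext ξ
    exact ft_eq_compact (fun y hy => hZ _ _ hy) _
  have hf : ContDiff ℝ (⊤ : ℕ∞)
      (fun v : (Fin d → ℝ) × (Fin d → ℝ) => ek v.2 p.1 * g p (v.2, v.1)) := by
    refine ContDiff.mul ((contDiff_ek_left p.1).comp contDiff_snd) ?_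
    exact (hs p).comp (g := g p) (f := fun v : VV d => (v.2, v.1)) (by fun_prop)
  rw [e, dirDerivList_compact_integral hf hK]
  unfold FT
  rw [ft_eq_compact (K := K) (fun y hy => DL_zero_off hK.isClosed (hZ p) _ (y, ξ) hy)]
  refine integral_congr_ae (Eventually.of_forall fun y => ?_)
  have h1 := congrFun (dirDerivList_comp_affine hf
    (ContinuousLinearMap.inl ℝ (Fin d → ℝ) (Fin d → ℝ)) (0, y)
    (l.map fun i => Pi.single i (1 : ℝ))) ξ
  simp at h1
  have h2 := dirDerivList_clm_comp (f := fun ξ => g p (y, ξ))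
    ((hs p).comp (g := g p) (f := fun ξ : Fin d → ℝ => (y, ξ)) (by fun_prop))
    (ContinuousLinearMap.mul ℝ ℂ (ek y p.1)) (l.map fun i => Pi.single i (1 : ℝ))
  have h3 := congrFun h2 ξ
  simp only [ContinuousLinearMap.mul_apply'] at h3
  rw [h1, slice_snd (hs p)] at h3
  beta_reduce
  rw [← h3]
  simp [List.map_map, Function.comp_def]

lemma dirDerivList_zero_mem {E : Type} [NormedAddCommGroup E] [NormedSpace ℝ E] {f : E → ℂ}
    {l : List E} (h : (0 : E) ∈ l) : dirDerivList l f = fun _ => 0 := by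
  induction l with
  | nil => simp at h
  | cons v l ih =>
    rcases List.mem_cons.1 h with h | h
    · subst h
      funext x
      simp [dirDerivList, dirDeriv]
    · funext x
      simp [dirDerivList, dirDeriv, ih h]

lemma slice_integrable {f : VV d → ℂ} (hf : ContDiff ℝ (⊤ : ℕ∞) f) {K : Set (Fin d → ℝ)}
    (hK : IsCompact K) (hz : ∀ q : VV d, q.1 ∉ K → f q = 0) (ξ : Fin d → ℝ) :
    Integrable (fun y => f (y, ξ)) := by
  have hc : Continuous (fun y => f (y, ξ)) := hf.continuous.comp (by fun_prop)
  exact hc.integrable_of_hasCompactSupport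
    (HasCompactSupport.intro hK fun y hy => hz (y, ξ) hy)

lemma dirDerivList_slice_integrable {f : VV d → ℂ} (hf : ContDiff ℝ (⊤ : ℕ∞) f) {K : Set (Fin d → ℝ)}
    (hK : IsCompact K) (hz : ∀ q : VV d, q.1 ∉ K → f q = 0) (ξ : Fin d → ℝ)
    (l : List (Fin d → ℝ)) :
    Integrable (dirDerivList l (fun y => f (y, ξ))) := by
  have hs : ContDiff ℝ (⊤ : ℕ∞) (fun y => f (y, ξ)) :=
    hf.comp (g := f) (f := fun y : Fin d → ℝ => (y, ξ)) (by fun_prop)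
  exact (contDiff_dirDerivList hs l).continuous.integrable_of_hasCompactSupport
    (HasCompactSupport.intro hK fun y hy => dirDerivList_zero_of_eqOn_open hK.isClosed.isOpen_compl
      (fun y hy => hz (y, ξ) hy) l y hy)

lemma integral_norm_le_vol {f : (Fin d → ℝ) → ℂ} {K : Set (Fin d → ℝ)}
    (hK : IsCompact K) (hz : ∀ y ∉ K, f y = 0) {B : ℝ} (hB : ∀ y ∈ K, ‖f y‖ ≤ B) :
    ∫ y, ‖f y‖ ≤ B * (volume : Measure (Fin d → ℝ)).real K := by
  rw [← setIntegral_eq_integral_of_forall_compl_eq_zero (s := K) (fun y hy => by rw [hz y hy, norm_zero])]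
  have := norm_setIntegral_le_of_norm_le_const (μ := (volume : Measure (Fin d → ℝ))) (s := K)
    (f := fun y => ‖f y‖) (C := B) hK.measure_lt_top (fun y hy => by simpa using hB y hy)
  exact (le_abs_self _).trans this

lemma FT_bound {r m s : ℝ} (hr : r ∈ Set.Ico (0 : ℝ) 1) {g : PP d → VV d → ℂ}
    {K : Set (Fin d → ℝ)} (hK : IsCompact K) (hZ : ∀ p q, q.1 ∉ K → g p q = 0)
    (hC : ∀ n, Cls (SK K) (om r) n (fun z => jp z.2.2 ^ m * jp z.1.1 ^ s) g)
    (M : ℝ) (l : List (Fin d)) :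
    ∃ C : ℝ, 0 ≤ C ∧ ∀ p : PP d, p.2 ∈ Set.Icc (0 : ℝ) 1 → ∀ ξ,
      ‖FT (fun p => DL (l.map Sum.inr) (g p)) p ξ‖ ≤
        C * (jp ξ ^ m * jp p.1 ^ (-M) * (jp p.1 ^ 2 * (jp ξ)⁻¹) ^ l.length) := by
  have hs := (hC 0).smooth
  obtain ⟨N, hN⟩ := exists_nat_ge ((M + s) / (1 - r))
  have hr1 : 0 < 1 - r := by linarith [hr.2]
  rw [div_le_iff₀ hr1] at hN
  obtain ⟨C0, hC0, hb0⟩ := (hC _).bound (l.map Sum.inr) le_rfl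
  choose Cj hCj hbj using fun j : Fin d =>
    (hC _).bound (List.replicate N (Sum.inl j) ++ l.map Sum.inr) le_rfl
  set A := C0 + ∑ j, Cj j with hA
  have hA0 : 0 ≤ A := add_nonneg hC0 (Finset.sum_nonneg fun j _ => hCj j)
  have hCA : ∀ j, Cj j ≤ A := fun j =>
    (Finset.single_le_sum (fun i _ => hCj i) (Finset.mem_univ j)).trans (by linarith)
  have hV : 0 ≤ (volume : Measure (Fin d → ℝ)).real K := measureReal_nonneg
  refine ⟨2 ^ N * (A * (volume : Measure (Fin d → ℝ)).real K), by positivity, ?_⟩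
  rintro ⟨ζ, t⟩ ht ξ
  have pξ := jp_pos ξ
  have pζ := jp_pos ζ
  set Q := (jp ζ ^ 2 * (jp ξ)⁻¹) ^ l.length with hQ
  have hQ0 : 0 ≤ Q := by positivity
  have hnr : nr (l.map (Sum.inr : Fin d → Fin d ⊕ Fin d)) = l.length := by
    unfold nr; rw [List.countP_map]; simp [Function.comp_def]
  have hnl : nl (l.map (Sum.inr : Fin d → Fin d ⊕ Fin d)) = 0 := by
    unfold nl; rw [List.countP_map]; simp [Function.comp_def]
  set R := jp ξ ^ m * jp ζ ^ s * ((jp ζ ^ r) ^ N * Q) with hR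
  have hR0 : 0 ≤ R := by positivity
  have h1r : 1 ≤ (jp ζ ^ r) ^ N := one_le_pow₀ (Real.one_le_rpow (one_le_jp _) hr.1)
  have key := ft_decay (f := fun y => DL (l.map Sum.inr) (g (ζ, t)) (y, ξ)) (N := N)
    (B := A * R * (volume : Measure (Fin d → ℝ)).real K) ?_ ?_ ?_ ?_ ζ
  · have e : FT (fun p => DL (l.map Sum.inr) (g p)) (ζ, t) ξ =
      ft (fun y => DL (l.map Sum.inr) (g (ζ, t)) (y, ξ)) ζ := rfl
    rw [e]
    rw [← le_div_iff₀' (pow_pos pζ N)] at key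
    refine key.trans ?_
    rw [div_le_iff₀ (pow_pos pζ N)]
    have h5 : jp ζ ^ s * (jp ζ ^ r) ^ N ≤ jp ζ ^ (-M) * jp ζ ^ N := by
      rw [← Real.rpow_natCast (jp ζ ^ r), ← Real.rpow_mul pζ.le, ← Real.rpow_natCast (jp ζ) N,
        ← Real.rpow_add pζ, ← Real.rpow_add pζ]
      exact Real.rpow_le_rpow_of_exponent_le (one_le_jp _) (by nlinarith)
    have h6 : 0 ≤ 2 ^ N * (A * (volume : Measure (Fin d → ℝ)).real K) * (jp ξ ^ m * Q) := by positivity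
    calc _ = 2 ^ N * (A * (volume : Measure (Fin d → ℝ)).real K) * (jp ξ ^ m * Q) *
          (jp ζ ^ s * (jp ζ ^ r) ^ N) := by rw [hR]; ring
      _ ≤ _ := mul_le_mul_of_nonneg_left h5 h6
      _ = _ := by ring
  · exact (contDiff_DL (hs _) _).comp (f := fun y : Fin d → ℝ => (y, ξ)) (by fun_prop)
  · exact dirDerivList_slice_integrable (contDiff_DL (hs _) _) hK
      (fun q hq => DL_zero_off hK.isClosed (hZ _) _ q hq) ξ
  · refine integral_norm_le_vol hK (fun y hy => DL_zero_off hK.isClosed (hZ _) _ (y, ξ) hy) ?_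
    intro y hy
    refine (hb0 ((ζ, t), y, ξ) ⟨ht, hy⟩).trans ?_
    unfold om
    rw [prod_wt, hnr, hnl, pow_zero, one_mul]
    refine mul_le_mul (by rw [hA]; linarith [Finset.sum_nonneg fun j (_ : j ∈ Finset.univ) => hCj j])
      ?_ (by positivity) hA0
    exact mul_le_mul_of_nonneg_left (le_mul_of_one_le_left hQ0 h1r) (by positivity)
  · intro j
    have e : dirDerivList (List.replicate N (Pi.single j 1))
        (fun y => DL (l.map Sum.inr) (g (ζ, t)) (y, ξ)) = fun y =>
        DL (List.replicate N (Sum.inl j) ++ l.map Sum.inr) (g (ζ, t)) (y, ξ) := by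
      funext y
      rw [DL_append]
      have := slice_fst (contDiff_DL (hs (ζ, t)) (l.map Sum.inr)) (List.replicate N j) y ξ
      simpa [List.map_replicate] using this
    rw [e]
    refine integral_norm_le_vol hK (fun y hy => DL_zero_off hK.isClosed (hZ _) _ (y, ξ) hy) ?_
    intro y hy
    refine (hbj j ((ζ, t), y, ξ) ⟨ht, hy⟩).trans ?_
    have h7 : nr (List.replicate N (Sum.inl j) ++ l.map (Sum.inr : Fin d → Fin d ⊕ Fin d))
        = l.length := by
      unfold nr at hnr ⊢; rw [List.countP_append, hnr]; simp [List.countP_replicate]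
    have h8 : nl (List.replicate N (Sum.inl j) ++ l.map (Sum.inr : Fin d → Fin d ⊕ Fin d))
        = N := by
      unfold nl at hnl ⊢; rw [List.countP_append, hnl]; simp [List.countP_replicate]
    unfold om
    rw [prod_wt, h7, h8]
    exact mul_le_mul_of_nonneg_right (hCA j) hR0

/-- Region of integration. -/
def SI (d : ℕ) : Set (PP d × VV d) := {z | z.1.2 ∈ Set.Icc (0 : ℝ) 1}
/-- Weights for the oscillatory integral. -/
noncomputable def om2 {d : ℕ} : Fin d ⊕ Fin d → PP d × VV d → ℝ :=
  wt (fun z => jp z.1.1) (fun z => jp z.1.1 ^ 2 * (jp z.2.2)⁻¹)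

lemma om2_nonneg : ∀ i, ∀ z ∈ SI d, 0 ≤ om2 i z := by
  rintro (i | i) z _
  · exact (jp_pos _).le
  · exact mul_nonneg (pow_nonneg (jp_pos _).le _) (inv_pos.2 (jp_pos _)).le

lemma list_cases (L : List (Fin d ⊕ Fin d)) :
    (∃ i, Sum.inl i ∈ L) ∨ ∃ l : List (Fin d), L = l.map Sum.inr := by
  induction L with
  | nil => exact Or.inr ⟨[], rfl⟩
  | cons i L ih =>
    rcases i with i | i
    · exact Or.inl ⟨i, by simp⟩
    · rcases ih with ⟨j, hj⟩ | ⟨l, rfl⟩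
      · exact Or.inl ⟨j, by simp [hj]⟩
      · exact Or.inr ⟨i :: l, rfl⟩

lemma FT_cls {r m s : ℝ} (hr : r ∈ Set.Ico (0 : ℝ) 1) {g : PP d → VV d → ℂ}
    {K : Set (Fin d → ℝ)} (hK : IsCompact K) (hZ : ∀ p q, q.1 ∉ K → g p q = 0)
    (hJ : ContDiff ℝ (⊤ : ℕ∞) (fun w : PP d × VV d => g w.1 w.2))
    (hC : ∀ n, Cls (SK K) (om r) n (fun z => jp z.2.2 ^ m * jp z.1.1 ^ s) g)
    (M : ℝ) (n : ℕ) :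
    Cls (SI d) om2 n (fun z => jp z.2.2 ^ m * jp z.1.1 ^ (-M)) (fun p q => FT g p q.2) := by
  have hFs : ∀ p, ContDiff ℝ (⊤ : ℕ∞) (FT g p) := fun p =>
    (FT_smooth hK hJ hZ).comp (f := fun ξ : Fin d → ℝ => (p, ξ)) (by fun_prop)
  refine ⟨fun p => (hFs p).comp contDiff_snd, fun L _ => ?_⟩
  have hA : ∀ p q, DL L (fun q : VV d => FT g p q.2) q =
      dirDerivList (L.map fun i => (ebas i).2) (FT g p) q.2 := by
    intro p q
    have := congrFun (dirDerivList_comp_affine (hFs p)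
      (ContinuousLinearMap.snd ℝ (Fin d → ℝ) (Fin d → ℝ)) 0 (L.map ebas)) q
    simp [List.map_map, Function.comp_def] at this
    exact this
  rcases list_cases L with ⟨i, hi⟩ | ⟨l, rfl⟩
  · refine ⟨0, le_rfl, fun z _ => ?_⟩
    rw [hA, dirDerivList_zero_mem (List.mem_map.2 ⟨Sum.inl i, hi, rfl⟩)]
    simp
  · obtain ⟨C, hC0, hb⟩ := FT_bound hr hK hZ hC M l
    refine ⟨C, hC0, ?_⟩
    rintro ⟨p, q⟩ hz
    have h1 := hb p hz q.2
    rw [← FT_dirDerivList hK (hC 0).smooth hZ] at h1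
    rw [hA, List.map_map]
    refine h1.trans (le_of_eq ?_)
    unfold om2
    rw [prod_wt]
    have hnr : nr (l.map (Sum.inr : Fin d → Fin d ⊕ Fin d)) = l.length := by
      unfold nr; rw [List.countP_map]; simp [Function.comp_def]
    have hnl : nl (l.map (Sum.inr : Fin d → Fin d ⊕ Fin d)) = 0 := by
      unfold nl; rw [List.countP_map]; simp [Function.comp_def]
    rw [hnr, hnl, pow_zero, one_mul]
end FTsec

open MeasureTheory Filter Topology
section oscsec
variable {d : ℕ}

/-- Inverse Fourier kernel. -/
noncomputable def eki {d : ℕ} (x ζ : Fin d → ℝ) : ℂ := Complex.exp (Complex.I * (dotp x ζ : ℂ))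

lemma contDiff_eki : ContDiff ℝ (⊤ : ℕ∞) (fun z : VV d => eki z.1 z.2) := by
  unfold eki
  exact (contDiff_const.mul (Complex.ofRealCLM.contDiff.comp contDiff_dotp)).cexp

lemma norm_eki (y ζ : Fin d → ℝ) : ‖eki y ζ‖ = 1 := by
  unfold eki
  rw [Complex.norm_exp]; simp

lemma eki_cls (n : ℕ) : Cls (SI d) om2 n (fun _ => 1) (fun p q => eki q.1 p.1) := by
  unfold eki
  have hlin : ∀ p : PP d, (fun q : VV d => ((dotp q.1 p.1 : ℝ) : ℂ)) =
      (Complex.ofRealCLM.comp ((dotpL p.1).comp (ContinuousLinearMap.fst ℝ _ _)) : VV d →L[ℝ] ℂ) := by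
    intro p; funext q; simp [dotpL_apply]
  refine Cls.exp om2_nonneg (φ := fun p q => ((dotp q.1 p.1 : ℝ) : ℂ)) ?_ ?_ ?_ n
  · intro p
    rw [hlin p]
    exact ContinuousLinearMap.contDiff _
  · intro i n
    have hd : ∀ p : PP d, dirDeriv (ebas i) (fun q : VV d => ((dotp q.1 p.1 : ℝ) : ℂ)) =
        fun _ => ((dotp (ebas i).1 p.1 : ℝ) : ℂ) := by
      intro p
      rw [hlin p]
      funext q
      unfold dirDeriv
      rw [ContinuousLinearMap.fderiv]
      simp [dotpL_apply]
    simp only [hd]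
    have hz : ∀ (c : ℂ) (L : List (Fin d ⊕ Fin d)), L ≠ [] → DL L (fun _ => c) = fun _ => 0 := by
      intro c L
      induction L with
      | nil => simp
      | cons j L ih =>
        intro _
        rw [DL_cons contDiff_const]
        have e : dirDeriv (ebas j) (fun _ : VV d => c) = fun _ => 0 := by
          funext q; unfold dirDeriv; simp
        rw [e]
        funext q
        exact dirDerivList_zero_of_eqOn_open isOpen_univ (fun _ _ => rfl) _ q trivial
    refine ⟨fun p => contDiff_const, fun L _ => ⟨1, zero_le_one, ?_⟩⟩
    intro z hzS
    by_cases hL : L = []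
    · subst hL
      simp only [DL, List.map_nil, dirDerivList, List.prod_nil, mul_one, one_mul, Complex.norm_real]
      rcases i with i | i
      · simp only [ebas, dotp_single, om2, wt]
        exact (norm_le_pi_norm z.1.1 i).trans (by unfold jp; linarith)
      · have : dotp (ebas (Sum.inr i)).1 z.1.1 = 0 := by simp [ebas, dotp]
        rw [this, norm_zero]
        exact om2_nonneg _ z hzS
    · rw [hz _ L hL, norm_zero, one_mul]
      exact mul_nonneg (om2_nonneg _ z hzS) (prod_weight_nonneg om2_nonneg L hzS)
  · intro p q
    have := norm_eki q.1 p.1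
    unfold eki at this
    exact this

lemma Cls.param_mul {P : Type*} {S : Set (P × VV d)} {ω : Fin d ⊕ Fin d → P × VV d → ℝ} {n : ℕ}
    {W : P × VV d → ℝ} {f : P → VV d → ℂ} (hf : Cls S ω n W f) (κ : P → ℂ) {A : P → ℝ}
    (hA : ∀ z ∈ S, ‖κ z.1‖ ≤ A z.1) :
    Cls S ω n (fun z => A z.1 * W z) (fun p q => κ p * f p q) := by
  refine ⟨fun p => contDiff_const.mul (hf.smooth p), fun L hL => ?_⟩
  obtain ⟨C, hC, hb⟩ := hf.bound L hL
  refine ⟨C, hC, fun z hz => ?_⟩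
  have e : DL L (fun q => κ z.1 * f z.1 q) z.2 = κ z.1 * DL L (f z.1) z.2 := by
    have := congrFun (dirDerivList_clm_comp (hf.smooth z.1) (ContinuousLinearMap.mul ℝ ℂ (κ z.1))
      (L.map ebas)) z.2
    simpa [DL] using this
  rw [e, norm_mul]
  calc _ ≤ A z.1 * (C * (W z * (L.map (fun i => ω i z)).prod)) :=
        mul_le_mul (hA z hz) (hb z hz) (norm_nonneg _) ((norm_nonneg _).trans (hA z hz))
    _ = _ := by ring

/-- The measure on the parameters. -/
noncomputable def muI (d : ℕ) : Measure (PP d) :=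
  (volume : Measure (Fin d → ℝ)).prod ((volume : Measure ℝ).restrict (Set.Icc 0 1))

lemma muI_ae : ∀ᵐ z ∂muI d, z.2 ∈ Set.Icc (0 : ℝ) 1 := by
  unfold muI
  have : ∀ᵐ t ∂((volume : Measure ℝ).restrict (Set.Icc 0 1)), t ∈ Set.Icc (0 : ℝ) 1 :=
    ae_restrict_mem measurableSet_Icc
  exact Measure.quasiMeasurePreserving_snd.ae this

lemma jp_integrable : Integrable (fun ζ : Fin d → ℝ => jp ζ ^ (-((d : ℝ) + 1))) := by
  unfold jp
  refine integrable_one_add_norm ?_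
  simp

lemma jp_integrable_muI : Integrable (fun z : PP d => jp z.1 ^ (-((d : ℝ) + 1))) (muI d) := by
  unfold muI
  have := (jp_integrable (d := d)).mul_prod
    (integrable_const (1 : ℝ) (μ := (volume : Measure ℝ).restrict (Set.Icc 0 1)))
  simpa using this

lemma continuous_jp : Continuous (fun ξ : Fin d → ℝ => jp ξ) := by
  unfold jp; fun_prop

/-- Symbol estimates for oscillatory integrals with rapidly decreasing density. -/
lemma osc_PSym_aux {m : ℝ} {G : VV d × PP d → ℂ} (hG : ContDiff ℝ (⊤ : ℕ∞) G)
    (hC : ∀ (M : ℝ) (n : ℕ), Cls (SI d) om2 n (fun z => jp z.2.2 ^ m * jp z.1.1 ^ (-M))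
      (fun p q => G (q, p))) :
    Dom (muI d) G ∧ PSym m (fun q => ∫ z, G (q, z) ∂muI d) := by
  have hb : ∀ L : List (Fin d ⊕ Fin d), ∃ C : ℝ, 0 ≤ C ∧ ∀ z : PP d, z.2 ∈ Set.Icc (0 : ℝ) 1 →
      ∀ q : VV d, ‖PDL L G (q, z)‖ ≤ C * (jp q.2 ^ m * (jp q.2)⁻¹ ^ nr L) * jp z.1 ^ (-((d : ℝ) + 1)) := by
    intro L
    obtain ⟨C, hC0, hb⟩ := (hC ((nl L : ℝ) + 2 * nr L + ((d : ℝ) + 1)) _).bound L le_rfl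
    refine ⟨C, hC0, fun z hz q => ?_⟩
    have h1 := hb (z, q) hz
    unfold om2 at h1
    rw [prod_wt] at h1
    rw [PDL_slice hG]
    refine h1.trans (le_of_eq ?_)
    have pζ := jp_pos z.1
    have e : jp z.1 ^ (-((nl L : ℝ) + 2 * nr L + ((d : ℝ) + 1))) * jp z.1 ^ nl L * (jp z.1 ^ 2) ^ nr L
        = jp z.1 ^ (-((d : ℝ) + 1)) := by
      rw [← pow_mul, ← Real.rpow_natCast, ← Real.rpow_natCast, ← Real.rpow_add pζ, ← Real.rpow_add pζ]
      congr 1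
      push_cast
      ring
    dsimp only
    rw [← e, mul_pow]
    ring
  have hD : Dom (muI d) G := by
    intro L K hK
    obtain ⟨C, hC0, hb⟩ := hb L
    have hc : Continuous (fun q : VV d => C * (jp q.2 ^ m * (jp q.2)⁻¹ ^ nr L)) := by
      have h1 : Continuous (fun q : VV d => jp q.2) := continuous_jp.comp continuous_snd
      refine continuous_const.mul (Continuous.mul ?_ ?_)
      · exact h1.rpow_const fun q => Or.inl (jp_pos _).ne'
      · exact (h1.inv₀ fun q => (jp_pos _).ne').pow _
    obtain ⟨A, hA⟩ := hK.exists_bound_of_continuousOn hc.continuousOn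
    refine ⟨fun z => A * jp z.1 ^ (-((d : ℝ) + 1)), jp_integrable_muI.const_mul _, ?_⟩
    filter_upwards [muI_ae] with z hz q hq
    refine (hb z hz q).trans (mul_le_mul_of_nonneg_right ?_ (Real.rpow_nonneg (jp_pos _).le _))
    exact (le_abs_self _).trans (hA q hq)
  refine ⟨hD, fun K hK n => ⟨fun _ => hD.contDiff hG, fun L _ => ?_⟩⟩
  obtain ⟨C, hC0, hb⟩ := hb L
  have hI : 0 ≤ ∫ z, jp z.1 ^ (-((d : ℝ) + 1)) ∂muI d :=
    integral_nonneg fun z => Real.rpow_nonneg (jp_pos _).le _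
  refine ⟨C * ∫ z, jp z.1 ^ (-((d : ℝ) + 1)) ∂muI d, mul_nonneg hC0 hI, ?_⟩
  rintro ⟨_, q⟩ _
  rw [hD.DL_integral L hG, prod_wt]
  have : ∀ᵐ z ∂muI d, ‖PDL L G (q, z)‖ ≤
      C * (jp q.2 ^ m * (jp q.2)⁻¹ ^ nr L) * jp z.1 ^ (-((d : ℝ) + 1)) := by
    filter_upwards [muI_ae] with z hz
    exact hb z hz q
  refine (norm_integral_le_of_norm_le (jp_integrable_muI.const_mul _) this).trans (le_of_eq ?_)
  rw [integral_const_mul]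
  simp only [one_pow, one_mul]
  ring

/-- The integrand. -/
noncomputable def oscG {d : ℕ} (κ : PP d → ℂ) (g : PP d → VV d → ℂ) (w : VV d × PP d) : ℂ :=
  κ w.2 * (eki w.1.1 w.2.1 * FT g w.2 w.1.2)

lemma osc_PSym {r m s : ℝ} (hr : r ∈ Set.Ico (0 : ℝ) 1) {g : PP d → VV d → ℂ}
    {K : Set (Fin d → ℝ)} (hK : IsCompact K) (hZ : ∀ p q, q.1 ∉ K → g p q = 0)
    (hJ : ContDiff ℝ (⊤ : ℕ∞) (fun w : PP d × VV d => g w.1 w.2))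
    (hC : ∀ n, Cls (SK K) (om r) n (fun z => jp z.2.2 ^ m * jp z.1.1 ^ s) g)
    {κ : PP d → ℂ} (hκ : ContDiff ℝ (⊤ : ℕ∞) κ) {k : ℕ}
    (hκb : ∀ p : PP d, p.2 ∈ Set.Icc (0 : ℝ) 1 → ‖κ p‖ ≤ jp p.1 ^ k) :
    Dom (muI d) (oscG κ g) ∧ PSym m (fun q => ∫ z, oscG κ g (q, z) ∂muI d) := by
  refine osc_PSym_aux ?_ ?_
  · refine (hκ.comp contDiff_snd).mul (ContDiff.mul ?_ ?_)
    · exact contDiff_eki.comp (g := fun z : VV d => eki z.1 z.2)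
        (f := fun w : VV d × PP d => (w.1.1, w.2.1)) (by fun_prop)
    · exact (FT_smooth hK hJ hZ).comp (g := fun w : PP d × (Fin d → ℝ) => FT g w.1 w.2)
        (f := fun w : VV d × PP d => (w.2, w.1.2)) (by fun_prop)
  · intro M n
    have h1 := (Cls.mul om2_nonneg (fun _ _ => zero_le_one) (eki_cls n)
      (FT_cls hr hK hZ hJ hC (M + k) n)).param_mul κ (A := fun p => jp p.1 ^ k)
      (fun z hz => hκb z.1 hz)
    refine Cls.mono om2_nonneg h1 zero_le_one fun z _ => le_of_eq ?_
    have pζ := jp_pos z.1.1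
    rw [← Real.rpow_natCast, one_mul, one_mul, mul_left_comm, ← Real.rpow_add pζ]
    congr 2
    ring
end oscsec

open MeasureTheory Filter Topology
section invsec
variable {d : ℕ}
open scoped FourierTransform RealInnerProductSpace

lemma eki_eq_ek (x ζ : Fin d → ℝ) : eki x ζ = ek x (-ζ) := by
  unfold eki ek dotp
  simp

lemma fourier_eq_ft (f : (Fin d → ℝ) → ℂ) (w : EuclideanSpace ℝ (Fin d)) :
    𝓕 (fun v : EuclideanSpace ℝ (Fin d) => f (WithLp.ofLp v)) w =
      ft f ((2 * Real.pi) • WithLp.ofLp w) := by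
  rw [Real.fourier_eq']
  unfold ft
  rw [← (PiLp.volume_preserving_toLp (Fin d)).integral_comp
    (MeasurableEquiv.toLp 2 (Fin d → ℝ)).measurableEmbedding]
  congr 1; funext y
  rw [smul_eq_mul]
  congr 1
  unfold ek dotp
  congr 1
  simp [PiLp.inner_apply, Finset.mul_sum, Finset.sum_mul, Complex.ofReal_sum]
  refine Finset.sum_congr rfl fun i _ => ?_
  ring

lemma ft_inv {f : (Fin d → ℝ) → ℂ} (hc : Continuous f) (hi : Integrable f)
    (hi' : Integrable (ft f)) (x : Fin d → ℝ) :
    (((2 * Real.pi) ^ (-(d : ℝ)) : ℝ) : ℂ) * ∫ ζ, eki x ζ * ft f ζ = f x := by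
  have hpi : (0 : ℝ) < 2 * Real.pi := by positivity
  have mp := PiLp.volume_preserving_toLp (Fin d)
  have me := (MeasurableEquiv.toLp 2 (Fin d → ℝ)).measurableEmbedding
  have h1 : Continuous (fun v : EuclideanSpace ℝ (Fin d) => f (WithLp.ofLp v)) :=
    hc.comp (PiLp.continuous_ofLp 2 _)
  have h2 : Integrable (fun v : EuclideanSpace ℝ (Fin d) => f (WithLp.ofLp v)) := by
    rw [← mp.integrable_comp_emb me]
    exact hi
  have h3 : Integrable (𝓕 (fun v : EuclideanSpace ℝ (Fin d) => f (WithLp.ofLp v))) := by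
    rw [← mp.integrable_comp_emb me]
    have : (𝓕 (fun v : EuclideanSpace ℝ (Fin d) => f (WithLp.ofLp v))) ∘ (WithLp.toLp 2) =
        fun ζ => ft f ((2 * Real.pi) • ζ) := by
      funext ζ
      simp [fourier_eq_ft]
    rw [this]
    exact hi'.comp_smul hpi.ne'
  have h4 := congrFun (h1.fourierInv_fourier_eq h2 h3) (WithLp.toLp 2 x)
  rw [Real.fourierInv_eq'] at h4
  simp only [fourier_eq_ft] at h4
  rw [← mp.integral_comp me] at h4
  have h5 := Measure.integral_comp_smul (volume : Measure (Fin d → ℝ)) (fun ζ => eki x ζ * ft f ζ)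
    (2 * Real.pi)
  rw [Module.finrank_fin_fun, abs_of_pos (by positivity), Complex.real_smul] at h5
  rw [Real.rpow_neg hpi.le, Real.rpow_natCast, ← h5]
  refine Eq.trans ?_ h4
  congr 1; funext ζ
  rw [smul_eq_mul]
  congr 1
  unfold eki dotp
  congr 1
  simp [PiLp.inner_apply, Finset.mul_sum, Finset.sum_mul, Complex.ofReal_sum]
  refine Finset.sum_congr rfl fun i _ => ?_
  ring
end invsec

open MeasureTheory Filter Topology
section taylorsec
variable {d : ℕ}

lemma le_mOrder (α : Fin d → ℕ) (i : Fin d) : α i ≤ mOrder α :=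
  Finset.single_le_sum (f := α) (fun _ _ => Nat.zero_le _) (Finset.mem_univ i)

lemma mem_mIdxLt {N : ℕ} {α : Fin d → ℕ} : α ∈ mIdxLt d N ↔ mOrder α < N := by
  unfold mIdxLt
  simp only [Finset.mem_filter, Fintype.mem_piFinset, Finset.mem_range, and_iff_right_iff_imp]
  intro h i
  exact (le_mOrder α i).trans_lt h

lemma mem_mIdxEq {N : ℕ} {α : Fin d → ℕ} : α ∈ mIdxEq d N ↔ mOrder α = N := by
  unfold mIdxEq
  simp only [Finset.mem_filter, Fintype.mem_piFinset, Finset.mem_range, and_iff_right_iff_imp]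
  intro h i
  have := le_mOrder α i
  omega

lemma sum_mIdxLt_succ (N : ℕ) (X : (Fin d → ℕ) → ℂ) :
    ∑ α ∈ mIdxLt d (N + 1), X α = ∑ α ∈ mIdxLt d N, X α + ∑ α ∈ mIdxEq d N, X α := by
  have hd : Disjoint (mIdxLt d N) (mIdxEq d N) := by
    rw [Finset.disjoint_left]
    intro α h1 h2
    rw [mem_mIdxLt] at h1
    rw [mem_mIdxEq] at h2
    omega
  rw [← Finset.sum_union hd]
  congr 1
  ext α
  rw [Finset.mem_union, mem_mIdxLt, mem_mIdxLt, mem_mIdxEq]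
  omega

lemma sum_mIdxLt (N : ℕ) (X : (Fin d → ℕ) → ℂ) :
    ∑ α ∈ mIdxLt d N, X α = ∑ k ∈ Finset.range N, ∑ α ∈ mIdxEq d k, X α := by
  induction N with
  | zero =>
    have : mIdxLt d 0 = ∅ := by
      ext α; simp [mem_mIdxLt]
    simp [this]
  | succ N ih => rw [sum_mIdxLt_succ, ih, Finset.sum_range_succ]

lemma mOrder_add_single (α : Fin d → ℕ) (i : Fin d) : mOrder (α + Pi.single i 1) = mOrder α + 1 := by
  unfold mOrder
  simp [Finset.sum_add_distrib, Pi.single_apply]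

lemma mFactorial_add_single (α : Fin d → ℕ) (i : Fin d) :
    mFactorial (α + Pi.single i 1) = (α i + 1) * mFactorial α := by
  unfold mFactorial
  rw [← Finset.mul_prod_erase _ _ (Finset.mem_univ i), ← Finset.mul_prod_erase _ _ (Finset.mem_univ i),
    ← mul_assoc]
  congr 1
  · simp [Nat.factorial_succ]
  · refine Finset.prod_congr rfl fun j hj => ?_
    simp [Pi.single_apply, (Finset.mem_erase.1 hj).1]

lemma mpow_add_single (ζ : Fin d → ℝ) (α : Fin d → ℕ) (i : Fin d) :
    mpow ζ (α + Pi.single i 1) = ζ i * mpow ζ α := by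
  unfold mpow
  rw [← Finset.mul_prod_erase _ _ (Finset.mem_univ i), ← Finset.mul_prod_erase _ _ (Finset.mem_univ i),
    ← mul_assoc]
  congr 1
  · simp [pow_succ, mul_comm]
  · refine Finset.prod_congr rfl fun j hj => ?_
    simp [Pi.single_apply, (Finset.mem_erase.1 hj).1]

lemma mFactorial_ne_zero (α : Fin d → ℕ) : (mFactorial α : ℂ) ≠ 0 := by
  unfold mFactorial
  exact_mod_cast Finset.prod_ne_zero_iff.2 fun i _ => Nat.factorial_ne_zero _

lemma sum_shift (k : ℕ) (X : (Fin d → ℕ) → ℂ) (i : Fin d) :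
    ∑ α ∈ mIdxEq d k, (mFactorial α : ℂ)⁻¹ * X (α + Pi.single i 1) =
      ∑ β ∈ mIdxEq d (k + 1), (β i : ℂ) * ((mFactorial β : ℂ)⁻¹ * X β) := by
  refine Finset.sum_of_injOn (fun α => α + Pi.single i 1) ?_ ?_ ?_ ?_
  · intro α _ β _ h
    exact add_right_cancel h
  · intro α hα
    have hα' := mem_mIdxEq.1 (Finset.mem_coe.1 hα)
    refine Finset.mem_coe.2 (mem_mIdxEq.2 ?_)
    rw [mOrder_add_single, hα']
  · intro β hβ hn
    by_cases h0 : β i = 0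
    · simp [h0]
    · exfalso
      apply hn
      have e : β - Pi.single i 1 + Pi.single i 1 = β := by
        funext j
        by_cases hj : j = i
        · subst hj; simp; omega
        · simp [Pi.single_apply, hj]
      refine ⟨β - Pi.single i 1, ?_, e⟩
      refine Finset.mem_coe.2 (mem_mIdxEq.2 ?_)
      have h1 := mOrder_add_single (β - Pi.single i 1) i
      rw [e, mem_mIdxEq.1 hβ] at h1
      omega
  · intro α _
    rw [mFactorial_add_single]
    have h1 : ((α i : ℂ) + 1) ≠ 0 := Nat.cast_add_one_ne_zero (α i)
    have h2 := mFactorial_ne_zero α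
    push_cast
    simp only [Pi.add_apply, Pi.single_eq_same]
    push_cast
    field_simp

/-- Taylor terms. -/
noncomputable def TT (ζ : Fin d → ℝ) (F : (Fin d → ℕ) → ℝ → ℂ) (k : ℕ) (t : ℝ) : ℂ :=
  ∑ α ∈ mIdxEq d k, (mFactorial α : ℂ)⁻¹ * ((mpow ζ α : ℂ) * F α t)

lemma TT_deriv {ζ : Fin d → ℝ} {F : (Fin d → ℕ) → ℝ → ℂ}
    (hF : ∀ α t, HasDerivAt (F α) (∑ i, (ζ i : ℂ) * F (α + Pi.single i 1) t) t) (k : ℕ) (t : ℝ) :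
    HasDerivAt (TT ζ F k) ((k + 1 : ℂ) * TT ζ F (k + 1) t) t := by
  have h1 : HasDerivAt (TT ζ F k) (∑ α ∈ mIdxEq d k, (mFactorial α : ℂ)⁻¹ *
      ((mpow ζ α : ℂ) * ∑ i, (ζ i : ℂ) * F (α + Pi.single i 1) t)) t := by
    have e : TT ζ F k = ∑ α ∈ mIdxEq d k, fun t => (mFactorial α : ℂ)⁻¹ * ((mpow ζ α : ℂ) * F α t) := by
      funext t; simp [TT]
    rw [e]
    exact HasDerivAt.sum fun α _ => ((hF α t).const_mul _).const_mul _
  convert h1 using 1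
  have h2 : ∀ α, (mFactorial α : ℂ)⁻¹ * ((mpow ζ α : ℂ) * ∑ i, (ζ i : ℂ) * F (α + Pi.single i 1) t) =
      ∑ i, (mFactorial α : ℂ)⁻¹ * ((mpow ζ (α + Pi.single i 1) : ℂ) * F (α + Pi.single i 1) t) := by
    intro α
    rw [Finset.mul_sum, Finset.mul_sum]
    refine Finset.sum_congr rfl fun i _ => ?_
    rw [mpow_add_single]
    push_cast
    ring
  simp_rw [h2]
  rw [Finset.sum_comm]
  have h3 := fun i => sum_shift k (fun β => (mpow ζ β : ℂ) * F β t) i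
  simp_rw [h3]
  rw [Finset.sum_comm]
  unfold TT
  rw [Finset.mul_sum]
  refine Finset.sum_congr rfl fun β hβ => ?_
  rw [← Finset.sum_mul]
  congr 1
  have := mem_mIdxEq.1 hβ
  unfold mOrder at this
  rw [← Nat.cast_sum, this]
  push_cast; rfl

lemma taylor_deriv {ζ : Fin d → ℝ} {F : (Fin d → ℕ) → ℝ → ℂ}
    (hF : ∀ α t, HasDerivAt (F α) (∑ i, (ζ i : ℂ) * F (α + Pi.single i 1) t) t) (N : ℕ) (t : ℝ) :
    HasDerivAt (fun t : ℝ => ∑ k ∈ Finset.range N, ((1 - t : ℝ) : ℂ) ^ k * TT ζ F k t)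
      ((N : ℂ) * ((1 - t : ℝ) : ℂ) ^ (N - 1) * TT ζ F N t) t := by
  induction N with
  | zero => simpa using hasDerivAt_const t (0 : ℂ)
  | succ N ih =>
    simp_rw [Finset.sum_range_succ]
    have h0 : HasDerivAt (fun t : ℝ => ((1 - t : ℝ) : ℂ)) (-1) t := by
      have := ((hasDerivAt_id t).const_sub 1).ofReal_comp
      simpa using this
    have h1 := (h0.pow N).mul (TT_deriv hF N t)
    refine (ih.add h1).congr_deriv ?_
    simp only [Nat.add_sub_cancel, Pi.pow_apply]
    push_cast
    ring

lemma taylor_formula {ζ : Fin d → ℝ} {F : (Fin d → ℕ) → ℝ → ℂ}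
    (hF : ∀ α t, HasDerivAt (F α) (∑ i, (ζ i : ℂ) * F (α + Pi.single i 1) t) t) {N : ℕ} (hN : 1 ≤ N) :
    F 0 1 = ∑ α ∈ mIdxLt d N, (mFactorial α : ℂ)⁻¹ * ((mpow ζ α : ℂ) * F α 0) +
      ∑ α ∈ mIdxEq d N, (mFactorial α : ℂ)⁻¹ * ∫ t in Set.Icc (0 : ℝ) 1,
        (N : ℂ) * ((1 - t : ℝ) : ℂ) ^ (N - 1) * (mpow ζ α : ℂ) * F α t := by
  have hcF : ∀ α, Continuous (F α) := fun α =>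
    continuous_iff_continuousAt.2 fun t => (hF α t).continuousAt
  have hIntg : ∀ α, IntegrableOn (fun t : ℝ =>
      (N : ℂ) * ((1 - t : ℝ) : ℂ) ^ (N - 1) * (mpow ζ α : ℂ) * F α t) (Set.Icc 0 1) := by
    intro α
    refine Continuous.integrableOn_Icc ?_
    have := hcF α
    fun_prop
  have hcT : Continuous (TT ζ F N) :=
    continuous_iff_continuousAt.2 fun t => (TT_deriv hF N t).continuousAt
  have h1 := intervalIntegral.integral_eq_sub_of_hasDerivAt (a := 0) (b := 1)
    (fun t _ => taylor_deriv hF N t) (Continuous.intervalIntegrable (by fun_prop) _ _)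
  have h2 : ∑ k ∈ Finset.range N, ((1 - 1 : ℝ) : ℂ) ^ k * TT ζ F k 1 = F 0 1 := by
    obtain ⟨n, rfl⟩ := Nat.exists_eq_add_of_le hN
    rw [add_comm 1 n, Finset.sum_range_succ']
    have e : mIdxEq d 0 = {0} := by
      ext α
      rw [mem_mIdxEq, Finset.mem_singleton]
      unfold mOrder
      simp [funext_iff]
    simp [TT, e, mFactorial, mpow]
  have h3 : ∑ k ∈ Finset.range N, ((1 - 0 : ℝ) : ℂ) ^ k * TT ζ F k 0 =
      ∑ α ∈ mIdxLt d N, (mFactorial α : ℂ)⁻¹ * ((mpow ζ α : ℂ) * F α 0) := by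
    rw [sum_mIdxLt]
    simp [TT]
  rw [h2, h3, intervalIntegral.integral_of_le zero_le_one, ← integral_Icc_eq_integral_Ioc] at h1
  rw [← sub_eq_iff_eq_add', ← h1]
  unfold TT
  simp_rw [Finset.mul_sum]
  rw [integral_finsetSum]
  · refine Finset.sum_congr rfl fun α _ => ?_
    rw [← integral_const_mul]
    congr 1; funext t
    ring
  · intro α _
    have := (hIntg α).const_mul (mFactorial α : ℂ)⁻¹
    refine this.congr (Eventually.of_forall fun t => ?_)
    ring
end taylorsec

open MeasureTheory Filter Topology
section expsec
variable {d : ℕ}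

lemma gfam_smooth {a₁ a₂ : VV d → ℂ} (h₁ : ContDiff ℝ (⊤ : ℕ∞) a₁) (h₂ : ContDiff ℝ (⊤ : ℕ∞) a₂) :
    ContDiff ℝ (⊤ : ℕ∞) (fun w : PP d × VV d => gfam a₁ a₂ w.1 w.2) := by
  unfold gfam
  refine (h₁.comp contDiff_snd).mul ((Complex.conjCLE : ℂ →L[ℝ] ℂ).contDiff.comp ?_)
  refine h₂.comp (contDiff_snd.add (contDiff_const.prodMk ?_))
  fun_prop

lemma gfam_zero {a₁ a₂ : VV d → ℂ} {K : Set (Fin d → ℝ)} (hz : ∀ q : VV d, q.1 ∉ K → a₁ q = 0) :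
    ∀ p q, q.1 ∉ K → gfam a₁ a₂ p q = 0 := by
  intro p q hq
  unfold gfam
  rw [hz q hq, zero_mul]

lemma perm_lst_succ (α : Fin d → ℕ) (i : Fin d) : (i :: lst α).Perm (lst (α + Pi.single i 1)) := by
  rw [List.perm_iff_count]
  intro j
  rw [List.count_cons, count_lst, count_lst, Pi.add_apply, Pi.single_apply]
  by_cases h : i = j
  · subst h; simp
  · simp [h, Ne.symm h]

/-- Fibre derivatives of multi-index order. -/
noncomputable def dα (α : Fin d → ℕ) (a : VV d → ℂ) : VV d → ℂ := DL ((lst α).map Sum.inr) a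

lemma dα_smooth {a : VV d → ℂ} (h : ContDiff ℝ (⊤ : ℕ∞) a) (α : Fin d → ℕ) :
    ContDiff ℝ (⊤ : ℕ∞) (dα α a) := contDiff_DL h _

lemma dα_deriv {a : VV d → ℂ} (h : ContDiff ℝ (⊤ : ℕ∞) a) (α : Fin d → ℕ) (ζ : Fin d → ℝ) (q : VV d) :
    fderiv ℝ (dα α a) q (0, ζ) = ∑ i, (ζ i : ℂ) * dα (α + Pi.single i 1) a q := by
  have e : ((0, ζ) : VV d) = ∑ j, ζ j • ebas (Sum.inr j) := by
    have := ebas_expand (d := d) (0, ζ)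
    rw [Fintype.sum_sum_type] at this
    simpa using this
  rw [e, map_sum]
  refine Finset.sum_congr rfl fun i _ => ?_
  rw [map_smul, Complex.real_smul]
  congr 1
  have h1 := DL_perm h ((perm_lst_succ α i).map Sum.inr)
  unfold dα
  rw [← h1]
  rfl

lemma FT_gfam_hasDerivAt {a₁ a₂ : VV d → ℂ} {K : Set (Fin d → ℝ)} (hK : IsCompact K)
    (h₁ : ContDiff ℝ (⊤ : ℕ∞) a₁) (h₂ : ContDiff ℝ (⊤ : ℕ∞) a₂)
    (hz : ∀ q : VV d, q.1 ∉ K → a₁ q = 0) (ζ ξ : Fin d → ℝ) (α : Fin d → ℕ) (t : ℝ) :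
    HasDerivAt (fun t => FT (gfam a₁ (dα α a₂)) (ζ, t) ξ)
      (∑ i, (ζ i : ℂ) * FT (gfam a₁ (dα (α + Pi.single i 1) a₂)) (ζ, t) ξ) t := by
  have hs := FT_smooth hK (gfam_smooth h₁ (dα_smooth h₂ α)) (gfam_zero hz)
  set f : ℝ × (Fin d → ℝ) → ℂ := fun v => ek v.2 ζ * gfam a₁ (dα α a₂) (ζ, v.1) (v.2, ξ) with hf
  have hfs : ContDiff ℝ (⊤ : ℕ∞) f := by
    refine ContDiff.mul ((contDiff_ek_left ζ).comp contDiff_snd) ?_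
    exact (gfam_smooth h₁ (dα_smooth h₂ α)).comp (g := fun w : PP d × VV d => gfam a₁ (dα α a₂) w.1 w.2)
      (f := fun v : ℝ × (Fin d → ℝ) => ((ζ, v.1), (v.2, ξ))) (by fun_prop)
  have e : ∀ (β : Fin d → ℕ) (t : ℝ), FT (gfam a₁ (dα β a₂)) (ζ, t) ξ =
      ∫ y in K, ek y ζ * gfam a₁ (dα β a₂) (ζ, t) (y, ξ) := fun β t =>
    ft_eq_compact (fun y hy => gfam_zero hz _ (y, ξ) hy) ζ
  have e0 : (fun t => FT (gfam a₁ (dα α a₂)) (ζ, t) ξ) = fun t => ∫ y in K, f (t, y) := by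
    funext t; exact e α t
  rw [e0]
  have hd := ((contDiff_compact_integral (μ := volume) hfs hK).differentiable (by simp)) t
  refine hd.hasDerivAt.congr_deriv ?_
  have h3 := congrFun (dirDeriv_compact_integral (μ := volume) hfs hK (1 : ℝ)) t
  have h4 : dirDeriv (1 : ℝ) (fun q => ∫ y in K, f (q, y)) t = deriv (fun q => ∫ y in K, f (q, y)) t := rfl
  rw [← h4, h3]
  simp_rw [e]
  simp_rw [← integral_const_mul]
  rw [← integral_finsetSum]
  · refine integral_congr_ae (Eventually.of_forall fun y => ?_)
    have h5 : HasDerivAt (fun t => f (t, y)) (dirDeriv ((1 : ℝ), (0 : Fin d → ℝ)) f (t, y)) t := by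
      have h6 : HasFDerivAt (fun t : ℝ => (t, y)) (ContinuousLinearMap.inl ℝ ℝ (Fin d → ℝ)) t :=
        hasFDerivAt_prodMk_left t y
      have := ((hfs.differentiable (by simp)) (t, y)).hasFDerivAt.comp t h6
      exact this.hasDerivAt
    have h7 : HasDerivAt (fun t => f (t, y))
        (ek y ζ * (a₁ (y, ξ) * (starRingEnd ℂ) (fderiv ℝ (dα α a₂) ((y, ξ) + (0, t • ζ)) (0, ζ)))) t := by
      have h8 : HasDerivAt (fun t : ℝ => ((y, ξ) + (0, t • ζ) : VV d)) (0, ζ) t := by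
        refine HasDerivAt.const_add _ (HasDerivAt.prodMk (hasDerivAt_const _ _) ?_)
        simpa using (hasDerivAt_id t).smul_const ζ
      have h9 := (((dα_smooth h₂ α).differentiable (by simp)) _).hasFDerivAt.comp_hasDerivAt t h8
      have h10 := ((Complex.conjCLE : ℂ →L[ℝ] ℂ).hasFDerivAt.comp_hasDerivAt t h9).const_mul (a₁ (y, ξ))
      exact h10.const_mul (ek y ζ)
    have h11 := h5.unique h7
    beta_reduce
    rw [h11, dα_deriv h₂, map_sum, Finset.mul_sum, Finset.mul_sum]
    refine Finset.sum_congr rfl fun i _ => ?_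
    simp only [gfam, map_mul, Complex.conj_ofReal]
    ring
  · intro i _
    refine ContinuousOn.integrableOn_compact hK (Continuous.continuousOn ?_)
    refine continuous_const.mul ((contDiff_ek_left ζ).continuous.mul ?_)
    exact (gfam_smooth h₁ (dα_smooth h₂ (α + Pi.single i 1))).continuous.comp
      (f := fun y : Fin d → ℝ => (((ζ, t), (y, ξ)) : PP d × VV d)) (by fun_prop)

/-- The Taylor weight. -/
noncomputable def kap (N : ℕ) (α : Fin d → ℕ) (p : PP d) : ℂ :=
  ((1 - p.2 : ℝ) : ℂ) ^ (N - 1) * (mpow p.1 α : ℂ)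

lemma kap_smooth (N : ℕ) (α : Fin d → ℕ) : ContDiff ℝ (⊤ : ℕ∞) (kap N α) := by
  have h : ContDiff ℝ (⊤ : ℕ∞) (fun p : PP d => ((1 - p.2 : ℝ) : ℂ)) :=
    Complex.ofRealCLM.contDiff.comp (contDiff_const.sub contDiff_snd)
  have h2 : ContDiff ℝ (⊤ : ℕ∞) (fun p : PP d => ∏ i, p.1 i ^ α i) :=
    contDiff_prod fun i _ => by fun_prop
  have h3 : ContDiff ℝ (⊤ : ℕ∞) (fun p : PP d => ((∏ i, p.1 i ^ α i : ℝ) : ℂ)) :=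
    Complex.ofRealCLM.contDiff.comp h2
  exact (h.pow _).mul h3

lemma kap_bound (N : ℕ) (α : Fin d → ℕ) (p : PP d) (hp : p.2 ∈ Set.Icc (0 : ℝ) 1) :
    ‖kap N α p‖ ≤ jp p.1 ^ mOrder α := by
  unfold kap mpow
  rw [norm_mul, norm_pow, Complex.norm_real, Complex.norm_real, Real.norm_eq_abs, Real.norm_eq_abs,
    Finset.abs_prod, mOrder, ← Finset.prod_pow_eq_pow_sum]
  have h1 : |1 - p.2| ^ (N - 1) ≤ 1 :=
    pow_le_one₀ (abs_nonneg _) (by rw [abs_le]; constructor <;> linarith [hp.1, hp.2])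
  have h2 : ∏ i, |p.1 i ^ α i| ≤ ∏ i, jp p.1 ^ α i := by
    refine Finset.prod_le_prod (fun _ _ => abs_nonneg _) fun i _ => ?_
    rw [abs_pow]
    refine pow_le_pow_left₀ (abs_nonneg _) ?_ _
    have := norm_le_pi_norm p.1 i
    rw [Real.norm_eq_abs] at this
    unfold jp; linarith
  have h3 : 0 ≤ ∏ i, |p.1 i ^ α i| := Finset.prod_nonneg fun _ _ => abs_nonneg _
  nlinarith [pow_nonneg (abs_nonneg (1 - p.2)) (N - 1)]

lemma ft_integrable {f : (Fin d → ℝ) → ℂ} (hf : ContDiff ℝ (⊤ : ℕ∞) f)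
    {K : Set (Fin d → ℝ)} (hK : IsCompact K) (hz : ∀ y ∉ K, f y = 0) : Integrable (ft f) := by
  have hi : ∀ l, Integrable (dirDerivList l f) := fun l =>
    (contDiff_dirDerivList hf l).continuous.integrable_of_hasCompactSupport
    (HasCompactSupport.intro hK fun y hy => dirDerivList_zero_of_eqOn_open hK.isClosed.isOpen_compl
      (fun y hy => hz y hy) l y hy)
  have hc : Continuous (ft f) := by
    have e : ft f = fun ζ => ∫ y in K,
        (fun v : (Fin d → ℝ) × (Fin d → ℝ) => ek v.2 v.1 * f v.2) (ζ, y) := by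
      funext ζ; exact ft_eq_compact hz ζ
    rw [e]
    refine (contDiff_compact_integral (f := fun v : (Fin d → ℝ) × (Fin d → ℝ) => ek v.2 v.1 * f v.2)
      (ContDiff.mul ?_ (hf.comp contDiff_snd)) hK).continuous
    exact contDiff_ek.comp (g := fun z : VV d => ek z.1 z.2)
      (f := fun v : (Fin d → ℝ) × (Fin d → ℝ) => (v.2, v.1)) (by fun_prop)
  set B := (∫ y, ‖f y‖) + ∑ j, ∫ y, ‖dirDerivList (List.replicate (d + 1) (Pi.single j 1)) f y‖ with hB
  have hn : ∀ j, 0 ≤ ∫ y, ‖dirDerivList (List.replicate (d + 1) (Pi.single j 1)) f y‖ := fun j =>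
    integral_nonneg fun _ => norm_nonneg _
  have hn0 : 0 ≤ ∫ y, ‖f y‖ := integral_nonneg fun _ => norm_nonneg _
  have key := ft_decay hf hi (d + 1) (B := B)
    (by rw [hB]; linarith [Finset.sum_nonneg fun j (_ : j ∈ Finset.univ) => hn j])
    (fun j => by
      have := Finset.single_le_sum (fun i _ => hn i) (Finset.mem_univ j)
      rw [hB]; linarith)
  refine ((jp_integrable (d := d)).const_mul (2 ^ (d + 1) * B)).mono' hc.aestronglyMeasurable ?_
  refine Eventually.of_forall fun ζ => ?_
  have pζ := jp_pos ζ
  have e : jp ζ ^ (-((d : ℝ) + 1)) = (jp ζ ^ (d + 1))⁻¹ := by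
    rw [Real.rpow_neg pζ.le, ← Real.rpow_natCast]; push_cast; rfl
  rw [e, ← div_eq_mul_inv, le_div_iff₀' (pow_pos pζ _)]
  exact key ζ

lemma mpow_ft {f : (Fin d → ℝ) → ℂ} (hf : ContDiff ℝ (⊤ : ℕ∞) f)
    {K : Set (Fin d → ℝ)} (hK : IsCompact K) (hz : ∀ y ∉ K, f y = 0) (α : Fin d → ℕ) (ζ : Fin d → ℝ) :
    (mpow ζ α : ℂ) * ft f ζ = (-Complex.I) ^ mOrder α * ft (mpderiv α f) ζ := by
  have hi : ∀ l, Integrable (dirDerivList l f) := fun l =>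
    (contDiff_dirDerivList hf l).continuous.integrable_of_hasCompactSupport
    (HasCompactSupport.intro hK fun y hy => dirDerivList_zero_of_eqOn_open hK.isClosed.isOpen_compl
      (fun y hy => hz y hy) l y hy)
  rw [mpderiv_eq_lst, ft_dirDerivList hf hi, ← mul_assoc]
  congr 1
  have h1 : ((lst α).map (fun i => Complex.I * (ζ i : ℂ))).prod =
      Complex.I ^ mOrder α * (mpow ζ α : ℂ) := by
    rw [← length_lst, List.prod_map_mul]
    congr 1
    · simp
    · unfold lst mpow
      have h2 : ∀ l : List (Fin d), ((l.flatMap fun i => List.replicate (α i) i).map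
          (fun i => (ζ i : ℂ))).prod = (l.map fun i => (ζ i : ℂ) ^ α i).prod := by
        intro l
        induction l with
        | nil => simp
        | cons a l ih => simp [ih]
      rw [h2, ← Fin.prod_univ_def]
      push_cast
      rfl
  simp only [List.map_map, Function.comp_def, dotp_single]
  rw [h1, ← mul_assoc, ← mul_pow]
  simp
end expsec

open MeasureTheory Filter Topology
section expsec2
variable {d : ℕ}

lemma dα_zero (a : VV d → ℂ) : dα 0 a = a := by
  have : lst (0 : Fin d → ℕ) = [] := by
    rw [← List.length_eq_zero_iff, length_lst]; simp [mOrder]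
  unfold dα DL
  rw [this]; rfl

lemma FT_gfam_zero (a₁ a₂ : VV d → ℂ) (ζ ξ : Fin d → ℝ) :
    FT (gfam a₁ a₂) (ζ, 0) ξ = ft (fun y => a₁ (y, ξ) * (starRingEnd ℂ) (a₂ (y, ξ))) ζ := by
  unfold FT gfam
  simp

lemma eki_mul_integrable {f : (Fin d → ℝ) → ℂ} (hf : Integrable f) (x : Fin d → ℝ) :
    Integrable (fun ζ => eki x ζ * f ζ) := by
  have hc : Continuous (fun ζ => eki x ζ) := contDiff_eki.continuous.comp
    (g := fun z : VV d => eki z.1 z.2) (f := fun ζ => (x, ζ)) (by fun_prop)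
  refine hf.norm.mono' (hc.aestronglyMeasurable.mul hf.aestronglyMeasurable) ?_
  refine Eventually.of_forall fun ζ => ?_
  rw [norm_mul, norm_eki, one_mul]

lemma expansion {a₁ a₂ : VV d → ℂ} {K : Set (Fin d → ℝ)} (hK : IsCompact K)
    (h₁ : ContDiff ℝ (⊤ : ℕ∞) a₁) (h₂ : ContDiff ℝ (⊤ : ℕ∞) a₂)
    (hz : ∀ q : VV d, q.1 ∉ K → a₁ q = 0) {N : ℕ} (hN : 1 ≤ N)
    (hD : ∀ α ∈ mIdxEq d N, ∀ q, Integrable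
      (fun z => oscG (kap N α) (gfam a₁ (dα α a₂)) (q, z)) (muI d)) (x ξ : Fin d → ℝ) :
    (((2 * Real.pi) ^ (-(d : ℝ)) : ℝ) : ℂ) * ∫ ζ, eki x ζ * FT (gfam a₁ a₂) (ζ, 1) ξ =
      ∑ α ∈ mIdxLt d N, (mFactorial α : ℂ)⁻¹ * ((-Complex.I) ^ mOrder α *
        mpderiv α (fun y => a₁ (y, ξ) * (starRingEnd ℂ) (dα α a₂ (y, ξ))) x) +
      ∑ α ∈ mIdxEq d N, ((mFactorial α : ℂ)⁻¹ * ((N : ℂ) * (((2 * Real.pi) ^ (-(d : ℝ)) : ℝ) : ℂ))) *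
        ∫ z, oscG (kap N α) (gfam a₁ (dα α a₂)) ((x, ξ), z) ∂muI d := by
  set w : (Fin d → ℕ) → (Fin d → ℝ) → ℂ := fun α y => a₁ (y, ξ) * (starRingEnd ℂ) (dα α a₂ (y, ξ)) with hw
  have hws : ∀ α, ContDiff ℝ (⊤ : ℕ∞) (w α) := fun α => by
    refine (h₁.comp (by fun_prop)).mul ((Complex.conjCLE : ℂ →L[ℝ] ℂ).contDiff.comp ?_)
    exact (dα_smooth h₂ α).comp (f := fun y : Fin d → ℝ => ((y, ξ) : VV d)) (by fun_prop)
  have hwz : ∀ α, ∀ y ∉ K, w α y = 0 := fun α y hy => by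
    simp only [hw]; rw [hz (y, ξ) hy, zero_mul]
  have hms : ∀ α, ContDiff ℝ (⊤ : ℕ∞) (mpderiv α (w α)) := fun α => by
    rw [mpderiv_eq_lst]; exact contDiff_dirDerivList (hws α) _
  have hmz : ∀ α, ∀ y ∉ K, mpderiv α (w α) y = 0 := fun α y hy => by
    rw [mpderiv_eq_lst]
    exact dirDerivList_zero_of_eqOn_open hK.isClosed.isOpen_compl (fun y hy => hwz α y hy) _ y hy
  have hpt : ∀ ζ, eki x ζ * FT (gfam a₁ a₂) (ζ, 1) ξ =
      ∑ α ∈ mIdxLt d N, ((mFactorial α : ℂ)⁻¹ * (-Complex.I) ^ mOrder α) *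
        (eki x ζ * ft (mpderiv α (w α)) ζ) +
      ∑ α ∈ mIdxEq d N, ((mFactorial α : ℂ)⁻¹ * (N : ℂ)) * ∫ t in Set.Icc (0 : ℝ) 1,
        oscG (kap N α) (gfam a₁ (dα α a₂)) ((x, ξ), (ζ, t)) := by
    intro ζ
    have := taylor_formula (ζ := ζ) (F := fun α t => FT (gfam a₁ (dα α a₂)) (ζ, t) ξ)
      (fun α t => FT_gfam_hasDerivAt hK h₁ h₂ hz ζ ξ α t) hN
    simp only [dα_zero] at this
    rw [this, mul_add, Finset.mul_sum, Finset.mul_sum]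
    congr 1
    · refine Finset.sum_congr rfl fun α _ => ?_
      rw [FT_gfam_zero, mpow_ft (hws α) hK (hwz α)]
      ring
    · refine Finset.sum_congr rfl fun α _ => ?_
      rw [mul_left_comm, mul_assoc, ← integral_const_mul, ← integral_const_mul,
        ← integral_const_mul, ← integral_const_mul]
      congr 1
      funext t
      unfold oscG kap
      ring
  have hI1 : ∀ α ∈ mIdxLt d N, Integrable (fun ζ => ((mFactorial α : ℂ)⁻¹ * (-Complex.I) ^ mOrder α) *
        (eki x ζ * ft (mpderiv α (w α)) ζ)) := fun α _ =>
    (eki_mul_integrable (ft_integrable (hms α) hK (hmz α)) x).const_mul _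
  have hI2 : ∀ α ∈ mIdxEq d N, Integrable (fun ζ => ((mFactorial α : ℂ)⁻¹ * (N : ℂ)) *
      ∫ t in Set.Icc (0 : ℝ) 1, oscG (kap N α) (gfam a₁ (dα α a₂)) ((x, ξ), (ζ, t))) := fun α hα =>
    (Integrable.integral_prod_left (hD α hα (x, ξ))).const_mul _
  simp_rw [hpt]
  rw [integral_add (integrable_finsetSum _ hI1) (integrable_finsetSum _ hI2),
    integral_finsetSum _ hI1, integral_finsetSum _ hI2, mul_add, Finset.mul_sum, Finset.mul_sum]
  congr 1
  · refine Finset.sum_congr rfl fun α _ => ?_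
    rw [integral_const_mul, mul_left_comm, ft_inv (hms α).continuous ((hms α).continuous.integrable_of_hasCompactSupport
      (HasCompactSupport.intro hK (hmz α))) (ft_integrable (hms α) hK (hmz α))]
    ring
  · refine Finset.sum_congr rfl fun α hα => ?_
    rw [integral_const_mul, muI, integral_prod _ (hD α hα (x, ξ))]
    ring
end expsec2

open MeasureTheory Filter Topology
section opsec
variable {d : ℕ}

lemma schwartz_dirDerivList (u : SchwartzMap (Fin d → ℝ) ℂ) (l : List (Fin d → ℝ)) :
    ∃ g : SchwartzMap (Fin d → ℝ) ℂ, dirDerivList l (⇑u) = ⇑g := by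
  induction l with
  | nil => exact ⟨u, rfl⟩
  | cons v l ih =>
    obtain ⟨g, hg⟩ := ih
    refine ⟨LineDeriv.lineDerivOp v g, ?_⟩
    funext x
    rw [SchwartzMap.lineDerivOp_apply_eq_fderiv, ← hg]
    rfl

lemma ft_continuous {f : (Fin d → ℝ) → ℂ} (hf : Integrable f) : Continuous (ft f) := by
  unfold ft
  refine continuous_of_dominated (bound := fun y => ‖f y‖) (fun ζ => (ek_mul_integrable hf ζ).aestronglyMeasurable)
    (fun ζ => Eventually.of_forall fun y => ?_) hf.norm (Eventually.of_forall fun y => ?_)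
  · rw [norm_mul, norm_ek, one_mul]
  · refine Continuous.mul ?_ continuous_const
    exact contDiff_ek.continuous.comp (g := fun z : VV d => ek z.1 z.2)
      (f := fun ζ : Fin d → ℝ => (y, ζ)) (by fun_prop)

lemma ft_schwartz_integrable (u : SchwartzMap (Fin d → ℝ) ℂ) (M : ℝ) :
    Integrable (fun ξ => jp ξ ^ M * ‖ft (⇑u) ξ‖) := by
  have hf : ContDiff ℝ (⊤ : ℕ∞) (⇑u) := u.smooth _
  have hi : ∀ l, Integrable (dirDerivList l (⇑u)) := fun l => by
    obtain ⟨g, hg⟩ := schwartz_dirDerivList u l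
    rw [hg]; exact g.integrable
  have hc : Continuous (ft (⇑u)) := ft_continuous (hi [])
  obtain ⟨n, hn⟩ := exists_nat_ge (M + ((d : ℝ) + 1))
  set B := (∫ y, ‖u y‖) + ∑ j, ∫ y, ‖dirDerivList (List.replicate n (Pi.single j 1)) (⇑u) y‖ with hB
  have hn' : ∀ j, 0 ≤ ∫ y, ‖dirDerivList (List.replicate n (Pi.single j 1)) (⇑u) y‖ := fun j =>
    integral_nonneg fun _ => norm_nonneg _
  have hn0 : 0 ≤ ∫ y, ‖u y‖ := integral_nonneg fun _ => norm_nonneg _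
  have key := ft_decay hf hi n (B := B)
    (by rw [hB]; linarith [Finset.sum_nonneg fun j (_ : j ∈ Finset.univ) => hn' j])
    (fun j => by
      have := Finset.single_le_sum (fun i _ => hn' i) (Finset.mem_univ j)
      rw [hB]; linarith)
  have hcj : Continuous (fun ξ : Fin d → ℝ => jp ξ ^ M) :=
    continuous_jp.rpow_const fun q => Or.inl (jp_pos _).ne'
  refine ((jp_integrable (d := d)).const_mul (2 ^ n * B)).mono' (hcj.mul hc.norm).aestronglyMeasurable ?_
  refine Eventually.of_forall fun ζ => ?_
  have pζ := jp_pos ζ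
  rw [Real.norm_of_nonneg (mul_nonneg (Real.rpow_nonneg pζ.le _) (norm_nonneg _))]
  have h1 : jp ζ ^ M ≤ jp ζ ^ (-((d : ℝ) + 1)) * jp ζ ^ n := by
    rw [← Real.rpow_natCast, ← Real.rpow_add pζ]
    exact Real.rpow_le_rpow_of_exponent_le (one_le_jp _) (by linarith)
  calc jp ζ ^ M * ‖ft (⇑u) ζ‖ ≤ (jp ζ ^ (-((d : ℝ) + 1)) * jp ζ ^ n) * ‖ft (⇑u) ζ‖ :=
        mul_le_mul_of_nonneg_right h1 (norm_nonneg _)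
    _ = jp ζ ^ (-((d : ℝ) + 1)) * (jp ζ ^ n * ‖ft (⇑u) ζ‖) := by ring
    _ ≤ jp ζ ^ (-((d : ℝ) + 1)) * (2 ^ n * B) :=
        mul_le_mul_of_nonneg_left (key ζ) (Real.rpow_nonneg pζ.le _)
    _ = _ := by ring

lemma eki_alg (x y η ξ : Fin d → ℝ) : eki (x - y) η * eki y ξ = eki x η * ek y (η - ξ) := by
  unfold eki ek
  rw [← Complex.exp_add, ← Complex.exp_add]
  congr 1
  have : dotp (x - y) η + dotp y ξ = dotp x η - dotp y (η - ξ) := by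
    unfold dotp
    rw [← Finset.sum_add_distrib, ← Finset.sum_sub_distrib]
    refine Finset.sum_congr rfl fun i _ => ?_
    simp; ring
  have h2 := congrArg (fun t : ℝ => Complex.I * (t : ℂ)) this
  push_cast at h2
  linear_combination h2

lemma eki_add (x ζ ξ : Fin d → ℝ) : eki x (ζ + ξ) = eki x ζ * eki x ξ := by
  unfold eki
  rw [← Complex.exp_add]
  congr 1
  have : dotp x (ζ + ξ) = dotp x ζ + dotp x ξ := by
    unfold dotp
    rw [← Finset.sum_add_distrib]
    refine Finset.sum_congr rfl fun i _ => ?_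
    simp; ring
  rw [this]; push_cast; ring

lemma op_step1 {a₁ a₂ : VV d → ℂ} {K : Set (Fin d → ℝ)} (hK : IsCompact K)
    (h₁ : ContDiff ℝ (⊤ : ℕ∞) a₁) (h₂ : ContDiff ℝ (⊤ : ℕ∞) a₂)
    (hz : ∀ q : VV d, q.1 ∉ K → a₁ q = 0) {v : (Fin d → ℝ) → ℂ} (hv : Continuous v)
    (hvd : ∀ M : ℝ, Integrable (fun ξ => jp ξ ^ M * ‖v ξ‖)) {m₁ C : ℝ}
    (hb : ∀ y ∈ K, ∀ ξ, ‖a₁ (y, ξ)‖ ≤ C * jp ξ ^ m₁) (c : ℂ) (x η : Fin d → ℝ) :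
    ∫ y, eki (x - y) η * (starRingEnd ℂ) (a₂ (y, η)) * (c * ∫ ξ, eki y ξ * a₁ (y, ξ) * v ξ) =
      c * ∫ ξ, eki x η * (v ξ * FT (gfam a₁ a₂) (η - ξ, 1) ξ) := by
  have hcA : Continuous (fun y => eki (x - y) η * (starRingEnd ℂ) (a₂ (y, η))) := by
    refine Continuous.mul ?_ (Complex.continuous_conj.comp (h₂.continuous.comp (by fun_prop)))
    exact contDiff_eki.continuous.comp (g := fun z : VV d => eki z.1 z.2)
      (f := fun y : Fin d → ℝ => (x - y, η)) (by fun_prop)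
  have hcB : Continuous (fun w : VV d => eki w.1 w.2 * a₁ w * v w.2) :=
    (contDiff_eki.continuous.mul h₁.continuous).mul (hv.comp continuous_snd)
  have hIntg : Integrable (fun w : VV d => (eki (x - w.1) η * (starRingEnd ℂ) (a₂ (w.1, η))) *
      (eki w.1 w.2 * a₁ w * v w.2)) (volume.prod volume) := by
    obtain ⟨A, hA⟩ := hK.exists_bound_of_continuousOn hcA.continuousOn
    have hI : Integrable (fun w : VV d => (K.indicator (fun _ => |A| * |C|) w.1) * (jp w.2 ^ m₁ * ‖v w.2‖))
        (volume.prod volume) := by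
      refine Integrable.mul_prod ?_ (hvd m₁)
      exact (integrableOn_const hK.measure_lt_top.ne).integrable_indicator hK.measurableSet
    refine hI.mono' ((hcA.comp continuous_fst).mul hcB).aestronglyMeasurable ?_
    refine Eventually.of_forall fun w => ?_
    by_cases hw : w.1 ∈ K
    · rw [Set.indicator_of_mem hw, norm_mul, norm_mul (_ * _) (v w.2), norm_mul (eki _ _) (a₁ w), norm_eki, one_mul]
      have e1 := (hA w.1 hw).trans (le_abs_self A)
      have e2 : ‖a₁ w‖ ≤ |C| * jp w.2 ^ m₁ := (hb w.1 hw w.2).trans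
        (mul_le_mul_of_nonneg_right (le_abs_self C) (Real.rpow_nonneg (jp_pos _).le _))
      calc _ ≤ |A| * ((|C| * jp w.2 ^ m₁) * ‖v w.2‖) := by gcongr
        _ = _ := by ring
    · rw [Set.indicator_of_notMem hw, hz w hw]; simp
  have e1 : ∀ y, eki (x - y) η * (starRingEnd ℂ) (a₂ (y, η)) * (c * ∫ ξ, eki y ξ * a₁ (y, ξ) * v ξ) =
      c * ∫ ξ, (eki (x - y) η * (starRingEnd ℂ) (a₂ (y, η))) * (eki y ξ * a₁ (y, ξ) * v ξ) := by
    intro y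
    rw [integral_const_mul]; ring
  simp_rw [e1]
  rw [integral_const_mul]
  congr 1
  rw [integral_integral_swap hIntg]
  refine integral_congr_ae (Eventually.of_forall fun ξ => ?_)
  beta_reduce
  unfold FT ft
  rw [← integral_const_mul, ← integral_const_mul]
  refine integral_congr_ae (Eventually.of_forall fun y => ?_)
  have h3 := eki_alg x y η ξ
  have h4 : ((y, ξ) : VV d) + (0, (1 : ℝ) • (η - ξ)) = (y, η) := by
    simp
  simp only [gfam, h4]
  linear_combination ((starRingEnd ℂ) (a₂ (y, η)) * a₁ (y, ξ) * v ξ) * h3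

lemma op_step2 {a₁ a₂ : VV d → ℂ} {K : Set (Fin d → ℝ)} (hK : IsCompact K)
    (h₁ : ContDiff ℝ (⊤ : ℕ∞) a₁) (h₂ : ContDiff ℝ (⊤ : ℕ∞) a₂)
    (hz : ∀ q : VV d, q.1 ∉ K → a₁ q = 0) {v : (Fin d → ℝ) → ℂ} (hv : Continuous v)
    (hvd : ∀ M : ℝ, Integrable (fun ξ => jp ξ ^ M * ‖v ξ‖)) {m C : ℝ}
    (hb : ∀ ζ ξ, ‖FT (gfam a₁ a₂) (ζ, 1) ξ‖ ≤ C * (jp ξ ^ m * jp ζ ^ (-((d : ℝ) + 1)))) (x : Fin d → ℝ) :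
    ∫ η, ∫ ξ, eki x η * (v ξ * FT (gfam a₁ a₂) (η - ξ, 1) ξ) =
      ∫ ξ, eki x ξ * (∫ ζ, eki x ζ * FT (gfam a₁ a₂) (ζ, 1) ξ) * v ξ := by
  have hFs := (FT_smooth hK (gfam_smooth h₁ h₂) (gfam_zero hz)).continuous
  have hIntg : Integrable (fun w : VV d => eki x w.1 * (v w.2 * FT (gfam a₁ a₂) (w.1 - w.2, 1) w.2))
      (volume.prod volume) := by
    have hI := (Integrable.convolution_integrand (ContinuousLinearMap.mul ℝ ℝ) (hvd m)
      (jp_integrable (d := d))).const_mul C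
    refine hI.mono' ?_ ?_
    · refine Continuous.aestronglyMeasurable (Continuous.mul ?_ ((hv.comp continuous_snd).mul ?_))
      · exact contDiff_eki.continuous.comp (g := fun z : VV d => eki z.1 z.2)
          (f := fun w : VV d => (x, w.1)) (by fun_prop)
      · exact hFs.comp (g := fun w : PP d × (Fin d → ℝ) => FT (gfam a₁ a₂) w.1 w.2)
          (f := fun w : VV d => ((w.1 - w.2, 1), w.2)) (by fun_prop)
    · refine Eventually.of_forall fun w => ?_
      rw [norm_mul, norm_mul, norm_eki, one_mul]
      have := mul_le_mul_of_nonneg_left (hb (w.1 - w.2) w.2) (norm_nonneg (v w.2))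
      refine this.trans (le_of_eq ?_)
      simp only [ContinuousLinearMap.mul_apply']
      ring
  rw [integral_integral_swap hIntg]
  refine integral_congr_ae (Eventually.of_forall fun ξ => ?_)
  beta_reduce
  rw [← integral_add_right_eq_self _ ξ, mul_right_comm, ← integral_const_mul]
  refine integral_congr_ae (Eventually.of_forall fun ζ => ?_)
  beta_reduce
  rw [eki_add, add_sub_cancel_right]
  ring

lemma op_identity {a₁ a₂ : VV d → ℂ} {K : Set (Fin d → ℝ)} (hK : IsCompact K)
    (h₁ : ContDiff ℝ (⊤ : ℕ∞) a₁) (h₂ : ContDiff ℝ (⊤ : ℕ∞) a₂)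
    (hz : ∀ q : VV d, q.1 ∉ K → a₁ q = 0) {m m₁ C C' : ℝ}
    (hb : ∀ y ∈ K, ∀ ξ, ‖a₁ (y, ξ)‖ ≤ C' * jp ξ ^ m₁)
    (hb' : ∀ ζ ξ, ‖FT (gfam a₁ a₂) (ζ, 1) ξ‖ ≤ C * (jp ξ ^ m * jp ζ ^ (-((d : ℝ) + 1))))
    (u : SchwartzMap (Fin d → ℝ) ℂ) (x : Fin d → ℝ) :
    OpAdj (fun x ξ => a₂ (x, ξ)) (Op (fun x ξ => a₁ (x, ξ)) ⇑u) x =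
      Op (fun x ξ => (((2 * Real.pi) ^ (-(d : ℝ)) : ℝ) : ℂ) *
        ∫ ζ, eki x ζ * FT (gfam a₁ a₂) (ζ, 1) ξ) (⇑u) x := by
  set c : ℂ := (((2 * Real.pi) ^ (-(d : ℝ) / 2) : ℝ) : ℂ) with hc
  have hv : Continuous (fourierHat (⇑u)) := continuous_const.mul (ft_continuous u.integrable)
  have hvd : ∀ M : ℝ, Integrable (fun ξ => jp ξ ^ M * ‖fourierHat (⇑u) ξ‖) := by
    intro M
    have := (ft_schwartz_integrable u M).const_mul ‖c‖
    refine this.congr (Eventually.of_forall fun ξ => ?_)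
    have e : fourierHat (⇑u) ξ = c * ft (⇑u) ξ := rfl
    beta_reduce
    rw [e, norm_mul]; ring
  have s1 := fun η => op_step1 hK h₁ h₂ hz hv hvd hb c x η
  have s2 := op_step2 hK h₁ h₂ hz hv hvd hb' x
  have e1 : OpAdj (fun x ξ => a₂ (x, ξ)) (Op (fun x ξ => a₁ (x, ξ)) ⇑u) x =
      (((2 * Real.pi) ^ (-(d : ℝ)) : ℝ) : ℂ) * ∫ η, ∫ y, eki (x - y) η * (starRingEnd ℂ) (a₂ (y, η)) *
        (c * ∫ ξ, eki y ξ * a₁ (y, ξ) * fourierHat (⇑u) ξ) := rfl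
  rw [e1]
  simp_rw [s1]
  rw [integral_const_mul, s2]
  unfold Op
  rw [← hc, mul_left_comm, ← integral_const_mul]
  congr 2
  funext ξ
  have : Complex.exp (Complex.I * (dotp x ξ : ℂ)) = eki x ξ := rfl
  rw [this]
  ring
end opsec

open MeasureTheory Filter Topology

section finalsec
variable {d : ℕ}

lemma exp_conj_cancel {φ : ℂ} (h : φ.im = 0) (b c : ℂ) :
    (Complex.exp (Complex.I * φ) * b) * (starRingEnd ℂ) (Complex.exp (Complex.I * φ) * c) =
      b * (starRingEnd ℂ) c := by
  have h1 : (starRingEnd ℂ) (Complex.exp (Complex.I * φ)) = Complex.exp (-(Complex.I * φ)) := by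
    rw [← Complex.exp_conj, map_mul, Complex.conj_I, Complex.conj_eq_iff_im.2 h, neg_mul]
  rw [map_mul, h1]
  have h2 : Complex.exp (Complex.I * φ) * Complex.exp (-(Complex.I * φ)) = 1 := by
    rw [← Complex.exp_add, add_neg_cancel, Complex.exp_zero]
  linear_combination (b * (starRingEnd ℂ) c) * h2

lemma oscG_smooth {g : PP d → VV d → ℂ}
    {K : Set (Fin d → ℝ)} (hK : IsCompact K) (hZ : ∀ p q, q.1 ∉ K → g p q = 0)
    (hJ : ContDiff ℝ (⊤ : ℕ∞) (fun w : PP d × VV d => g w.1 w.2))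
    {κ : PP d → ℂ} (hκ : ContDiff ℝ (⊤ : ℕ∞) κ) : ContDiff ℝ (⊤ : ℕ∞) (oscG κ g) := by
  refine (hκ.comp contDiff_snd).mul (ContDiff.mul ?_ ?_)
  · exact contDiff_eki.comp (g := fun z : VV d => eki z.1 z.2)
      (f := fun w : VV d × PP d => (w.1.1, w.2.1)) (by fun_prop)
  · exact (FT_smooth hK hJ hZ).comp (g := fun w : PP d × (Fin d → ℝ) => FT g w.1 w.2)
      (f := fun w : VV d × PP d => (w.2, w.1.2)) (by fun_prop)

lemma explicit_formula (a₁ a₂ : VV d → ℂ) (x ζ ξ : Fin d → ℝ) :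
    eki x ζ * FT (gfam a₁ a₂) (ζ, 1) ξ = ∫ y, a₁ (y, ξ) * (starRingEnd ℂ) (a₂ (y, ξ + ζ)) *
      Complex.exp (Complex.I * (dotp (x - y) ζ : ℂ)) := by
  unfold FT ft
  rw [← integral_const_mul]
  refine integral_congr_ae (Eventually.of_forall fun y => ?_)
  have h4 : ((y, ξ) : VV d) + (0, (1 : ℝ) • ζ) = (y, ξ + ζ) := by simp
  have h3 := eki_alg x y ζ 0
  have h5 : eki y (0 : Fin d → ℝ) = 1 := by simp [eki, dotp]
  rw [h5, sub_zero, mul_one] at h3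
  have h6 : Complex.exp (Complex.I * (dotp (x - y) ζ : ℂ)) = eki (x - y) ζ := rfl
  simp only [gfam, h4, h6, h3]
  ring

lemma main_aux (r m₁ m₂ : ℝ) (hr : r ∈ Set.Ico (0 : ℝ) 1) {φ b₁ b₂ : VV d → ℂ}
    (hφ : PSym r φ) (hre : ∀ q, (φ q).im = 0) (hb₁ : PSym m₁ b₁) (hb₂ : PSym m₂ b₂)
    (a₁ a₂ : VV d → ℂ) (ha₁ : a₁ = fun q => Complex.exp (Complex.I * φ q) * b₁ q)
    (ha₂ : a₂ = fun q => Complex.exp (Complex.I * φ q) * b₂ q)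
    (K₀ : Set (Fin d → ℝ)) (hK₀ : IsCompact K₀)
    (hz₁ : ∀ q : VV d, q.1 ∉ K₀ → a₁ q = 0) (hz₂ : ∀ q : VV d, q.1 ∉ K₀ → a₂ q = 0)
    (h : (Fin d → ℝ) → (Fin d → ℝ) → ℂ)
    (hh : h = fun x ξ => (((2 * Real.pi) ^ (-(d : ℝ)) : ℝ) : ℂ) *
        ∫ ζ, eki x ζ * FT (gfam a₁ a₂) (ζ, 1) ξ) :
    PSym (m₁ + m₂) (fun q => h q.1 q.2) ∧
    (∀ u : SchwartzMap (Fin d → ℝ) ℂ, ∀ x,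
      OpAdj (fun x ξ => a₂ (x, ξ)) (Op (fun x ξ => a₁ (x, ξ)) ⇑u) x = Op h (⇑u) x) ∧
    (∀ α : Fin d → ℕ, PSym (m₁ + m₂ - (mOrder α : ℝ) * (1 - r)) (fun q => (-Complex.I) ^ (mOrder α) *
      mpderiv α (fun y => a₁ (y, q.2) * (starRingEnd ℂ) (dα α a₂ (y, q.2))) q.1)) ∧
    (∀ N : ℕ, 1 ≤ N → PSym (m₁ + m₂ - (N : ℝ) * (1 - r)) (fun q => h q.1 q.2 -
      ∑ α ∈ mIdxLt d N, (mFactorial α : ℂ)⁻¹ * ((-Complex.I) ^ (mOrder α) *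
        mpderiv α (fun y => a₁ (y, q.2) * (starRingEnd ℂ) (dα α a₂ (y, q.2))) q.1))) := by
  have hbz₂ : ∀ q : VV d, q.1 ∉ K₀ → b₂ q = 0 := fun q hq => by
    have := hz₂ q hq
    rw [ha₂] at this
    exact (mul_eq_zero.1 this).resolve_left (Complex.exp_ne_zero _)
  have hs₁ : ContDiff ℝ (⊤ : ℕ∞) a₁ := by
    rw [ha₁]
    exact (Complex.contDiff_exp.comp (contDiff_const.mul hφ.smooth)).mul hb₁.smooth
  have hs₂ : ContDiff ℝ (⊤ : ℕ∞) a₂ := by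
    rw [ha₂]
    exact (Complex.contDiff_exp.comp (contDiff_const.mul hφ.smooth)).mul hb₂.smooth
  have hex : ∀ α : Fin d → ℕ, ∃ c : VV d → ℂ, PSym (m₂ - (mOrder α : ℝ) * (1 - r)) c ∧
      dα α a₂ = fun q => Complex.exp (Complex.I * φ q) * c q := by
    intro α
    obtain ⟨c, hc, _, he⟩ := exp_symbol_deriv hr.1 hφ hb₂ hK₀.isClosed hbz₂ (lst α)
    rw [length_lst] at hc
    refine ⟨c, hc, ?_⟩
    unfold dα
    rw [ha₂, he]
  have hα : ∀ α : Fin d → ℕ, PSym (m₁ + m₂ - (mOrder α : ℝ) * (1 - r)) (fun q => (-Complex.I) ^ (mOrder α) *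
      mpderiv α (fun y => a₁ (y, q.2) * (starRingEnd ℂ) (dα α a₂ (y, q.2))) q.1) := by
    intro α
    obtain ⟨c, hc, he⟩ := hex α
    have h1 := hb₁.mul hc.conj
    have h2 := (h1.DL_inl (lst α)).const_mul ((-Complex.I) ^ (mOrder α))
    have e : m₁ + (m₂ - (mOrder α : ℝ) * (1 - r)) = m₁ + m₂ - (mOrder α : ℝ) * (1 - r) := by ring
    rw [e] at h2
    convert h2 using 2 with q
    rw [mpderiv_eq_lst, ← slice_fst h1.smooth]
    congr 2
    funext y
    rw [he, ha₁]
    exact exp_conj_cancel (hre _) _ _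
  have hosc : ∀ (N : ℕ) (α : Fin d → ℕ), Dom (muI d) (oscG (kap N α) (gfam a₁ (dα α a₂))) ∧
      PSym (m₁ + m₂ - (mOrder α : ℝ) * (1 - r))
        (fun q => ∫ z, oscG (kap N α) (gfam a₁ (dα α a₂)) (q, z) ∂muI d) := by
    intro N α
    obtain ⟨c, hc, he⟩ := hex α
    have e : m₁ + m₂ - (mOrder α : ℝ) * (1 - r) = m₁ + (m₂ - (mOrder α : ℝ) * (1 - r)) := by ring
    rw [e]
    refine osc_PSym (s := |m₁| + |m₂ - (mOrder α : ℝ) * (1 - r)|) hr hK₀ (gfam_zero hz₁) (gfam_smooth hs₁ (dα_smooth hs₂ α)) ?_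
      (kap_smooth N α) (kap_bound N α)
    intro n
    rw [he, ha₁]
    exact gfam_cls hr hφ hre hb₁ hc hK₀ n
  have hrem : ∀ N : ℕ, 1 ≤ N → PSym (m₁ + m₂ - (N : ℝ) * (1 - r)) (fun q => h q.1 q.2 -
      ∑ α ∈ mIdxLt d N, (mFactorial α : ℂ)⁻¹ * ((-Complex.I) ^ (mOrder α) *
        mpderiv α (fun y => a₁ (y, q.2) * (starRingEnd ℂ) (dα α a₂ (y, q.2))) q.1)) := by
    intro N hN
    have h1 : PSym (m₁ + m₂ - (N : ℝ) * (1 - r)) (fun q => ∑ α ∈ mIdxEq d N,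
        ((mFactorial α : ℂ)⁻¹ * ((N : ℂ) * (((2 * Real.pi) ^ (-(d : ℝ)) : ℝ) : ℂ))) *
        ∫ z, oscG (kap N α) (gfam a₁ (dα α a₂)) (q, z) ∂muI d) := by
      refine PSym.sum _ fun α hα => ?_
      have h2 := (hosc N α).2
      rw [mem_mIdxEq.1 hα] at h2
      exact h2.const_mul _
    convert h1 using 2 with q
    rw [hh]
    have h3 := expansion hK₀ hs₁ hs₂ hz₁ hN (fun α _ q => (hosc N α).1.integrable
      (oscG_smooth hK₀ (gfam_zero hz₁) (gfam_smooth hs₁ (dα_smooth hs₂ α)) (kap_smooth N α)) q) q.1 q.2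
    beta_reduce
    rw [h3, add_sub_cancel_left]
  refine ⟨?_, ?_, hα, hrem⟩
  · have h1 := (hrem 1 le_rfl).le (m' := m₁ + m₂) (by have := hr.2; push_cast; linarith)
    have h2 : PSym (m₁ + m₂) (fun q => ∑ α ∈ mIdxLt d 1, (mFactorial α : ℂ)⁻¹ * ((-Complex.I) ^ (mOrder α) *
        mpderiv α (fun y => a₁ (y, q.2) * (starRingEnd ℂ) (dα α a₂ (y, q.2))) q.1)) := by
      refine PSym.sum _ fun α _ => ((hα α).const_mul _).le ?_
      have := hr.2
      have h3 : (0 : ℝ) ≤ (mOrder α : ℝ) * (1 - r) := mul_nonneg (Nat.cast_nonneg _) (by linarith)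
      linarith
    have h3 := h1.add h2
    convert h3 using 2 with q
    ring
  · obtain ⟨C, hC0, hC⟩ := FT_bound hr hK₀ (gfam_zero (a₂ := a₂) hz₁) (m := m₁ + m₂) (s := |m₁| + |m₂|)
      (fun n => by
        rw [ha₁, ha₂]
        exact gfam_cls hr hφ hre hb₁ hb₂ hK₀ n) ((d : ℝ) + 1) []
    obtain ⟨C', hC'0, hC'⟩ := ((hb₁ K₀ hK₀ 0).bound [] le_rfl)
    intro u x
    rw [hh]
    refine op_identity hK₀ hs₁ hs₂ hz₁ (m := m₁ + m₂) (C := C) (m₁ := m₁) (C' := C') ?_ ?_ u x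
    · intro y hy ξ
      have h1 := hC' ((), (y, ξ)) hy
      have h2 : ‖a₁ (y, ξ)‖ = ‖b₁ (y, ξ)‖ := by
        rw [ha₁]
        beta_reduce
        rw [norm_mul, Complex.norm_exp]
        simp [hre]
      rw [h2]
      simpa [DL, dirDerivList] using h1
    · intro ζ ξ
      have := hC (ζ, 1) (by simp) ξ
      simpa [DL, dirDerivList] using this
end finalsec

/-- Theorem 2.6 / `bc1`: for `a_j = e^{iΦ}b_j ∈ 𝒞^{m_j}(Φ)` compactly
supported in `x`, the product `A₂*A₁` is a PDO with symbol `h ∈ S^{m₁+m₂}`, given by the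
explicit double integral, admitting the expansion `h ∼ Σ (α!)⁻¹ D_x^α (a₁ conj(∂_ξ^α a₂))`. -/
theorem statement5 {d : ℕ} (r m₁ m₂ : ℝ) (hr : r ∈ Set.Ico (0 : ℝ) 1)
    (Φ : (Fin d → ℝ) → (Fin d → ℝ) → ℝ)
    (b₁ b₂ : (Fin d → ℝ) → (Fin d → ℝ) → ℂ)
    (hΦ : IsSymbol Set.univ r 1 0 fun x ξ => ((Φ x ξ : ℝ) : ℂ))
    (hb₁ : IsSymbol Set.univ m₁ 1 0 b₁)
    (hb₂ : IsSymbol Set.univ m₂ 1 0 b₂)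
    (a₁ a₂ : (Fin d → ℝ) → (Fin d → ℝ) → ℂ)
    (ha₁ : a₁ = fun x ξ => Complex.exp (Complex.I * (Φ x ξ : ℂ)) * b₁ x ξ)
    (ha₂ : a₂ = fun x ξ => Complex.exp (Complex.I * (Φ x ξ : ℂ)) * b₂ x ξ)
    (K₀ : Set (Fin d → ℝ)) (hK₀ : IsCompact K₀)
    (hsupp : ∀ x ∉ K₀, ∀ ξ : Fin d → ℝ, a₁ x ξ = 0 ∧ a₂ x ξ = 0) :
    ∃ h : (Fin d → ℝ) → (Fin d → ℝ) → ℂ,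
      IsSymbol Set.univ (m₁ + m₂) 1 0 h ∧
      -- the explicit formula for `h`
      (∀ x ξ : Fin d → ℝ,
        h x ξ = (((2 * Real.pi) ^ (-(d : ℝ)) : ℝ) : ℂ) *
          ∫ ζ : Fin d → ℝ, ∫ y : Fin d → ℝ,
            a₁ y ξ * (starRingEnd ℂ) (a₂ y (ξ + ζ)) *
              Complex.exp (Complex.I * (dotp (x - y) ζ : ℂ))) ∧
      (∀ u : SchwartzMap (Fin d → ℝ) ℂ, ∀ x : Fin d → ℝ,
        OpAdj a₂ (Op a₁ ⇑u) x = Op h (⇑u) x) ∧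
      (∀ α : Fin d → ℕ,
        IsSymbol Set.univ (m₁ + m₂ - (mOrder α : ℝ) * (1 - r)) 1 0
          (fun x ξ => (-Complex.I) ^ (mOrder α) *
            mpderiv α (fun y => a₁ y ξ *
              (starRingEnd ℂ) (mpderiv α (fun η => a₂ y η) ξ)) x)) ∧
      (∀ N : ℕ, 1 ≤ N →
        IsSymbol Set.univ (m₁ + m₂ - (N : ℝ) * (1 - r)) 1 0
          (fun x ξ => h x ξ - ∑ α ∈ mIdxLt d N, (mFactorial α : ℂ)⁻¹ *
            ((-Complex.I) ^ (mOrder α) *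
              mpderiv α (fun y => a₁ y ξ *
                (starRingEnd ℂ) (mpderiv α (fun η => a₂ y η) ξ)) x))) := by
  rw [isSymbol_iff] at hΦ hb₁ hb₂
  have hA₁ : (fun q : VV d => a₁ q.1 q.2) =
      fun q => Complex.exp (Complex.I * (fun q : VV d => ((Φ q.1 q.2 : ℝ) : ℂ)) q) *
        (fun q : VV d => b₁ q.1 q.2) q := by rw [ha₁]
  have hA₂ : (fun q : VV d => a₂ q.1 q.2) =
      fun q => Complex.exp (Complex.I * (fun q : VV d => ((Φ q.1 q.2 : ℝ) : ℂ)) q) *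
        (fun q : VV d => b₂ q.1 q.2) q := by rw [ha₂]
  have hs₂ : ContDiff ℝ (⊤ : ℕ∞) (fun q : VV d => a₂ q.1 q.2) := by
    rw [hA₂]
    exact (Complex.contDiff_exp.comp (contDiff_const.mul hΦ.smooth)).mul hb₂.smooth
  have hmp : ∀ (α : Fin d → ℕ) (y ξ : Fin d → ℝ), mpderiv α (fun η => a₂ y η) ξ =
      dα α (fun q : VV d => a₂ q.1 q.2) (y, ξ) := by
    intro α y ξ
    rw [mpderiv_eq_lst]
    exact slice_snd hs₂ (lst α) y ξ
  obtain ⟨h1, h2, h3, h4⟩ := main_aux r m₁ m₂ hr hΦ (fun q => Complex.ofReal_im _) hb₁ hb₂ _ _ hA₁ hA₂ K₀ hK₀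
    (fun q hq => (hsupp q.1 hq q.2).1) (fun q hq => (hsupp q.1 hq q.2).2) _ rfl
  refine ⟨_, isSymbol_iff.2 h1, ?_, h2, ?_, ?_⟩
  · intro x ξ
    simp_rw [explicit_formula]
  · intro α
    rw [isSymbol_iff]
    simp_rw [hmp]
    exact h3 α
  · intro N hN
    rw [isSymbol_iff]
    simp_rw [hmp]
    exact h4 N hN
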